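/- arXiv:1912.00322 — 2 statements merged into one kernel-verified Lean document; each statement's English description precedes it below -/
import Mathlib

section
/- Let G be a connected r-regular graph that is not a complete graph of odd order. Then G has an IPD. -/
open SimpleGraph

variable {V : Type*} [Fintype V]

/-- P is a set of vertices inducing a path on n vertices in G. -/
def IsInducedPathOn (G : SimpleGraph V) (P : Set V) (n : ℕ) : Prop :=
  Nonempty (G.induce P ≃g pathGraph n)

/-- G has an induced path decomposition into induced paths each of order ≥ 2. -/
def HasIPD (G : SimpleGraph V) : Prop :=
  ∃ D : Set (Set V), Setoid.IsPartition D ∧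
    ∀ P ∈ D, ∃ n, 2 ≤ n ∧ IsInducedPathOn G P n



/-- Finsets that can be partitioned into edges and induced paths on three vertices. -/
inductive GoodSet {α : Type*} [DecidableEq α] (G : SimpleGraph α) : Finset α → Prop
  | empty : GoodSet G ∅
  | edge {X : Finset α} {x y : α} : G.Adj x y → x ∉ X → y ∉ X → GoodSet G X →
      GoodSet G (insert x (insert y X))
  | three {X : Finset α} {x y z : α} : G.Adj x y → G.Adj y z → ¬ G.Adj x z → x ≠ z →
      x ∉ X → y ∉ X → z ∉ X → GoodSet G X →
      GoodSet G (insert x (insert y (insert z X)))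

theorem GoodSet.union {α : Type*} [DecidableEq α] {G : SimpleGraph α} {X Y : Finset α}
    (hX : GoodSet G X) (hY : GoodSet G Y) (hd : Disjoint X Y) : GoodSet G (X ∪ Y) := by
  induction hX with
  | empty => simpa using hY
  | @edge X x y h hx hy _ ih =>
    rw [Finset.disjoint_left] at hd ih
    have := GoodSet.edge (G := G) (X := X ∪ Y) h (by have := @hd x; simp_all)
      (by have := @hd y; simp_all) (ih (fun a ha => hd (by simp [ha])))
    simpa [Finset.insert_union] using this
  | @three X x y z h1 h2 h3 h4 hx hy hz _ ih =>
    rw [Finset.disjoint_left] at hd ih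
    have := GoodSet.three (G := G) (X := X ∪ Y) h1 h2 h3 h4 (by have := @hd x; simp_all)
      (by have := @hd y; simp_all) (by have := @hd z; simp_all)
      (ih (fun a ha => hd (by simp [ha])))
    simpa [Finset.insert_union] using this

theorem GoodSet.biUnion {α ι : Type*} [DecidableEq α] [DecidableEq ι] {G : SimpleGraph α}
    (s : Finset ι) (f : ι → Finset α) (hf : ∀ i ∈ s, GoodSet G (f i))
    (hd : ∀ i ∈ s, ∀ j ∈ s, i ≠ j → Disjoint (f i) (f j)) : GoodSet G (s.biUnion f) := by
  induction s using Finset.induction_on with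
  | empty => simpa using GoodSet.empty
  | insert a s ha ih =>
    rw [Finset.biUnion_insert]
    refine GoodSet.union (hf a (by simp)) (ih (fun i hi => hf i (by simp [hi]))
      (fun i hi j hj => hd i (by simp [hi]) j (by simp [hj]))) ?_
    rw [Finset.disjoint_biUnion_right]
    intro i hi
    exact hd a (by simp) i (by simp [hi]) (by rintro rfl; exact ha hi)

theorem path_two_iso (G : SimpleGraph V) {x y : V} (h : G.Adj x y) :
    IsInducedPathOn G ({x, y} : Set V) 2 := by
  classical
  have hne : x ≠ y := h.ne
  let f : Fin 2 → ({x, y} : Set V) := ![⟨x, by simp⟩, ⟨y, by simp⟩]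
  have hf : Function.Bijective f := by
    constructor
    · intro i j hij
      fin_cases i <;> fin_cases j <;> simp_all [f]
    · rintro ⟨a, ha⟩
      rcases ha with rfl | ha
      · exact ⟨0, rfl⟩
      · rw [Set.mem_singleton_iff] at ha; subst ha; exact ⟨1, rfl⟩
  refine ⟨(RelIso.symm ⟨Equiv.ofBijective f hf, ?_⟩)⟩
  intro i j
  have h' := h.symm
  fin_cases i <;> fin_cases j <;> simp [f, pathGraph_adj, h, h']

theorem path_three_iso (G : SimpleGraph V) {x y z : V} (h1 : G.Adj x y) (h2 : G.Adj y z)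
    (h3 : ¬ G.Adj x z) (h4 : x ≠ z) :
    IsInducedPathOn G ({x, y, z} : Set V) 3 := by
  classical
  have hne1 : x ≠ y := h1.ne
  have hne2 : y ≠ z := h2.ne
  let f : Fin 3 → ({x, y, z} : Set V) := ![⟨x, by simp⟩, ⟨y, by simp⟩, ⟨z, by simp⟩]
  have hf : Function.Bijective f := by
    constructor
    · intro i j hij
      fin_cases i <;> fin_cases j <;> simp_all [f]
    · rintro ⟨a, ha⟩
      rcases ha with rfl | rfl | ha
      · exact ⟨0, rfl⟩
      · exact ⟨1, rfl⟩
      · rw [Set.mem_singleton_iff] at ha; subst ha; exact ⟨2, rfl⟩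
  refine ⟨(RelIso.symm ⟨Equiv.ofBijective f hf, ?_⟩)⟩
  intro i j
  have h1' := h1.symm
  have h2' := h2.symm
  have h3' : ¬ G.Adj z x := fun h => h3 h.symm
  fin_cases i <;> fin_cases j <;> simp [f, pathGraph_adj, h1, h2, h3, h1', h2', h3']

theorem GoodSet.exists_parts [DecidableEq V] {G : SimpleGraph V} {X : Finset V}
    (hX : GoodSet G X) :
    ∃ D : Set (Set V), ∅ ∉ D ∧ (∀ P ∈ D, ∀ a ∈ P, a ∈ X) ∧ (∀ a ∈ X, ∃! b, b ∈ D ∧ a ∈ b) ∧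
      ∀ P ∈ D, ∃ n, 2 ≤ n ∧ IsInducedPathOn G P n := by
  have key : ∀ (X Y : Finset V) (P : Set V) (n : ℕ), 2 ≤ n → IsInducedPathOn G P n → P.Nonempty →
      (∀ a ∈ P, a ∉ X) → (∀ a, a ∈ Y ↔ a ∈ P ∨ a ∈ X) → 
      (∃ D : Set (Set V), ∅ ∉ D ∧ (∀ P ∈ D, ∀ a ∈ P, a ∈ X) ∧ (∀ a ∈ X, ∃! b, b ∈ D ∧ a ∈ b) ∧
      ∀ P ∈ D, ∃ n, 2 ≤ n ∧ IsInducedPathOn G P n) → 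
      (∃ D : Set (Set V), ∅ ∉ D ∧ (∀ P ∈ D, ∀ a ∈ P, a ∈ Y) ∧ (∀ a ∈ Y, ∃! b, b ∈ D ∧ a ∈ b) ∧
      ∀ P ∈ D, ∃ n, 2 ≤ n ∧ IsInducedPathOn G P n) := by
    rintro X Y P n hn hP hne hd hY ⟨D, h0, h1, h2, h3⟩
    refine ⟨insert P D, ?_, ?_, ?_, ?_⟩
    · rintro (h | h)
      · rw [← h] at hne; exact Set.not_nonempty_empty hne
      · exact h0 h
    · rintro Q (rfl | hQ) a ha
      · exact (hY a).2 (Or.inl ha)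
      · exact (hY a).2 (Or.inr (h1 Q hQ a ha))
    · intro a ha
      by_cases haP : a ∈ P
      · refine ⟨P, ⟨Set.mem_insert _ _, haP⟩, ?_⟩
        rintro Q ⟨rfl | hQ, haQ⟩
        · rfl
        · exact absurd (h1 Q hQ a haQ) (hd a haP)
      · have haX : a ∈ X := ((hY a).1 ha).resolve_left haP
        obtain ⟨b, ⟨hb, hab⟩, hu⟩ := h2 a haX
        refine ⟨b, ⟨Set.mem_insert_of_mem _ hb, hab⟩, ?_⟩
        rintro Q ⟨rfl | hQ, haQ⟩
        · exact absurd haQ haP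
        · exact hu Q ⟨hQ, haQ⟩
    · rintro Q (rfl | hQ)
      · exact ⟨n, hn, hP⟩
      · exact h3 Q hQ
  induction hX with
  | empty => exact ⟨∅, by simp, by simp, by simp, by simp⟩
  | @edge X x y h hx hy _ ih =>
    refine key X _ {x, y} 2 le_rfl (path_two_iso G h) ⟨x, by simp⟩ ?_ ?_ ih
    · rintro a (rfl | ha)
      · exact hx
      · rw [Set.mem_singleton_iff] at ha; subst ha; exact hy
    · intro a; simp [or_assoc]
  | @three X x y z h1 h2 h3 h4 hx hy hz _ ih =>
    refine key X _ {x, y, z} 3 (by norm_num) (path_three_iso G h1 h2 h3 h4) ⟨x, by simp⟩ ?_ ?_ ih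
    · rintro a (rfl | rfl | ha)
      · exact hx
      · exact hy
      · rw [Set.mem_singleton_iff] at ha; subst ha; exact hz
    · intro a; simp [or_assoc]

theorem GoodSet.hasIPD [DecidableEq V] {G : SimpleGraph V} (h : GoodSet G Finset.univ) :
    HasIPD G := by
  obtain ⟨D, h0, h1, h2, h3⟩ := h.exists_parts
  exact ⟨D, ⟨h0, fun a => h2 a (Finset.mem_univ a)⟩, h3⟩

/-- `μ` is a perfect matching of the finset `X`, given as an involution. -/
def PMOn {α : Type*} (G : SimpleGraph α) (X : Finset α) (μ : α → α) : Prop :=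
  ∀ x ∈ X, μ x ∈ X ∧ μ (μ x) = x ∧ G.Adj x (μ x)

theorem PMOn.good_even {α : Type*} [DecidableEq α] {G : SimpleGraph α} {μ : α → α} :
    ∀ (n : ℕ) (X : Finset α), X.card = n → PMOn G X μ → GoodSet G X ∧ Even X.card := by
  intro n
  induction n using Nat.strong_induction_on with
  | _ n ih =>
    intro X hn hX
    rcases X.eq_empty_or_nonempty with rfl | ⟨x, hx⟩
    · exact ⟨GoodSet.empty, by simp⟩
    · obtain ⟨h1, h2, h3⟩ := hX x hx
      have hmem : μ x ∈ X.erase x := Finset.mem_erase.2 ⟨h3.ne', h1⟩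
      have hc1 := Finset.card_erase_add_one hx
      have hc2 := Finset.card_erase_add_one hmem
      have hPM : PMOn G ((X.erase x).erase (μ x)) μ := by
        intro y hy
        simp only [Finset.mem_erase] at hy ⊢
        obtain ⟨hy1, hy2, hy3⟩ := hy
        obtain ⟨k1, k2, k3⟩ := hX y hy3
        refine ⟨⟨?_, ?_, k1⟩, k2, k3⟩
        · intro h; rw [h, h2] at k2; exact hy2 k2.symm
        · intro h; rw [h] at k2; exact hy1 k2.symm
      obtain ⟨g, e⟩ := ih _ (by omega) _ rfl hPM
      constructor
      · have := GoodSet.edge h3 (by simp) (by simp) g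
        rwa [Finset.insert_erase hmem, Finset.insert_erase hx] at this
      · have : X.card = ((X.erase x).erase (μ x)).card + 2 := by omega
        rw [this]; exact e.add (by decide)

theorem PMOn.good {α : Type*} [DecidableEq α] {G : SimpleGraph α} {μ : α → α} {X : Finset α}
    (h : PMOn G X μ) : GoodSet G X := (PMOn.good_even _ X rfl h).1

theorem PMOn.even {α : Type*} [DecidableEq α] {G : SimpleGraph α} {μ : α → α} {X : Finset α}
    (h : PMOn G X μ) : Even X.card := (PMOn.good_even _ X rfl h).2

/-- Tutte's theorem inside a finset. -/
theorem tutte_finset {α : Type*} [Fintype α] [DecidableEq α] (G : SimpleGraph α) (X : Finset α)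
    (h : ¬ ∃ μ, PMOn G X μ) :
    ∃ U ⊆ X, ∃ F : Finset (Finset α),
      (∀ C ∈ F, Odd C.card ∧ C ⊆ X \ U ∧ ∀ x ∈ C, ∀ y ∈ X \ U, G.Adj x y → y ∈ C) ∧
      (∀ C ∈ F, ∀ D ∈ F, C ≠ D → Disjoint C D) ∧ U.card < F.card := by
  classical
  let H := G.induce (X : Set α)
  have hno : ¬ ∃ M : H.Subgraph, M.IsPerfectMatching := by
    rintro ⟨M, hM⟩
    rw [Subgraph.isPerfectMatching_iff] at hM
    choose f hf hfu using hM
    apply h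
    refine ⟨fun x => if hx : x ∈ X then (f ⟨x, hx⟩ : α) else x, ?_⟩
    intro x hx
    have hm : (f ⟨x, hx⟩ : α) ∈ X := (f ⟨x, hx⟩).2
    simp only [hx, dif_pos, hm]
    refine ⟨trivial, ?_, ?_⟩
    · have := hfu (f ⟨x, hx⟩) ⟨x, hx⟩ (hf ⟨x, hx⟩).symm
      exact (congrArg Subtype.val this).symm
    · exact (hf ⟨x, hx⟩).adj_sub
  rw [tutte] at hno
  push Not at hno
  obtain ⟨u, hu⟩ := hno
  unfold IsTutteViolator at hu
  let K := ((⊤ : H.Subgraph).deleteVerts u).coe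
  let e : ((⊤ : H.Subgraph).deleteVerts u).verts ↪ α :=
    (Function.Embedding.subtype _).trans (Function.Embedding.subtype _)
  have he : ∀ v, e v = ((v : (X : Set α)) : α) := fun v => rfl
  let cs : K.ConnectedComponent → Finset α := fun c => c.supp.toFinset.map e
  have hmem : ∀ (c : K.ConnectedComponent) v, e v ∈ cs c ↔ K.connectedComponentMk v = c := by
    intro c v
    simp [cs, Finset.mem_map', ConnectedComponent.mem_supp_iff]
  have hex : ∀ (c : K.ConnectedComponent) a, a ∈ cs c →
      ∃ v, e v = a ∧ K.connectedComponentMk v = c := by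
    intro c a ha
    simp only [cs, Finset.mem_map, Set.mem_toFinset, ConnectedComponent.mem_supp_iff] at ha
    obtain ⟨v, hv, rfl⟩ := ha
    exact ⟨v, rfl, hv⟩
  have hdisj : ∀ c d, c ≠ d → Disjoint (cs c) (cs d) := by
    intro c d hcd
    rw [Finset.disjoint_left]
    intro a ha hb
    obtain ⟨v, rfl, hv⟩ := hex c a ha
    exact hcd (hv.symm.trans ((hmem d v).1 hb))
  have hinj : Function.Injective cs := by
    intro c d hcd
    by_contra hne
    have := hdisj c d hne
    rw [hcd, disjoint_self, Finset.bot_eq_empty] at this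
    obtain ⟨v, hv⟩ := d.nonempty_supp
    have := (hmem d v).2 hv
    simp_all
  let U : Finset α := u.toFinset.map (Function.Embedding.subtype _)
  have hUmem : ∀ a (ha : a ∈ X), a ∈ U ↔ (⟨a, ha⟩ : (X : Set α)) ∈ u := by
    intro a ha
    simp [U, ha]
  have hUsub : U ⊆ X := by
    intro a ha
    simp only [U, Finset.mem_map] at ha
    obtain ⟨b, _, rfl⟩ := ha
    exact b.2
  refine ⟨U, hUsub, (K.oddComponents.toFinset).image cs, ?_, ?_, ?_⟩
  · intro C hC
    simp only [Finset.mem_image, Set.mem_toFinset] at hC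
    obtain ⟨c, hc, rfl⟩ := hC
    refine ⟨?_, ?_, ?_⟩
    · have : Odd c.supp.ncard := hc
      simpa [cs, Set.ncard_eq_toFinset_card'] using this
    · intro a ha
      obtain ⟨v, rfl, hv⟩ := hex c a ha
      rw [Finset.mem_sdiff]
      refine ⟨v.1.2, ?_⟩
      rw [he, hUmem _ v.1.2]
      exact v.2.2
    · intro a ha y hy hay
      obtain ⟨v, rfl, hv⟩ := hex c a ha
      rw [Finset.mem_sdiff] at hy
      have hyu : (⟨y, hy.1⟩ : (X : Set α)) ∉ u := fun h => hy.2 ((hUmem y hy.1).2 h)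
      let w : ((⊤ : H.Subgraph).deleteVerts u).verts := ⟨⟨y, hy.1⟩, by simp [hyu]⟩
      have hvw : K.Adj v w := by
        have h2 : v.1 ∉ u := v.2.2
        simp only [K, Subgraph.coe_adj, Subgraph.deleteVerts_adj]
        refine ⟨trivial, h2, trivial, hyu, hay⟩
      have : e w ∈ cs c := by
        rw [hmem, ← hv]
        exact ConnectedComponent.sound hvw.symm.reachable
      exact this
  · intro C hC D hD hCD
    simp only [Finset.mem_image, Set.mem_toFinset] at hC hD
    obtain ⟨c, hc, rfl⟩ := hC
    obtain ⟨d, hd, rfl⟩ := hD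
    exact hdisj c d (fun h => hCD (by rw [h]))
  · rw [Finset.card_image_of_injective _ hinj]
    rw [Set.ncard_eq_toFinset_card', Set.ncard_eq_toFinset_card'] at hu
    simpa [U] using hu

/-- `F` is a family of pairwise disjoint odd sets, each a union of components of `G - S`. -/
def IsFam {α : Type*} (G : SimpleGraph α) (S : Finset α) (F : Finset (Finset α)) : Prop :=
  (∀ C ∈ F, Odd C.card ∧ Disjoint C S ∧ ∀ x ∈ C, ∀ y, G.Adj x y → y ∈ C ∨ y ∈ S) ∧
  ∀ C ∈ F, ∀ D ∈ F, C ≠ D → Disjoint C D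

/-- A maximal barrier. -/
def IsMaxFam {α : Type*} (G : SimpleGraph α) (S : Finset α) (F : Finset (Finset α)) : Prop :=
  IsFam G S F ∧ (∀ S' F', IsFam G S' F' → F'.card + S.card ≤ F.card + S'.card) ∧
  (∀ S' F', IsFam G S' F' → F'.card + S.card = F.card + S'.card → S'.card ≤ S.card)

theorem exists_maxFam {α : Type*} [Fintype α] [DecidableEq α] (G : SimpleGraph α) :
    ∃ S F, IsMaxFam G S F := by
  classical
  let n := Fintype.card α
  let P : Finset (Finset α × Finset (Finset α)) := Finset.univ.filter (fun p => IsFam G p.1 p.2)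
  have hne : P.Nonempty := ⟨(∅, ∅), Finset.mem_filter.2 ⟨Finset.mem_univ _, by simp [IsFam]⟩⟩
  obtain ⟨⟨S, F⟩, hm, hmax⟩ := Finset.exists_max_image P
    (fun p => ((n : ℤ) + 1) * ((p.2.card : ℤ) - p.1.card) + p.1.card) hne
  have hm' : IsFam G S F := by simpa [P] using hm
  have hmax' : ∀ S' F', IsFam G S' F' → ((n : ℤ) + 1) * ((F'.card : ℤ) - S'.card) + S'.card ≤
      ((n : ℤ) + 1) * ((F.card : ℤ) - S.card) + S.card := by
    intro S' F' h
    exact hmax (S', F') (by simpa [P] using h)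
  have hS : (S.card : ℤ) ≤ n := by exact_mod_cast Finset.card_le_univ S
  refine ⟨S, F, hm', ?_, ?_⟩
  · intro S' F' h
    have h1 := hmax' S' F' h
    by_contra hlt
    push Not at hlt
    have h2 : (F.card : ℤ) + S'.card + 1 ≤ F'.card + S.card := by exact_mod_cast hlt
    have h3 : (0 : ℤ) ≤ S'.card := by positivity
    nlinarith
  · intro S' F' h he
    have h1 := hmax' S' F' h
    have h2 : (F'.card : ℤ) - S'.card = F.card - S.card := by
      have : (F'.card : ℤ) + S.card = F.card + S'.card := by exact_mod_cast he
      linarith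
    rw [h2] at h1
    have : (S'.card : ℤ) ≤ S.card := by linarith
    exact_mod_cast this

theorem IsFam.insert_set {α : Type*} [DecidableEq α] {G : SimpleGraph α} {S : Finset α}
    {F : Finset (Finset α)} (h : IsFam G S F) {R : Finset α} (hodd : Odd R.card)
    (hRS : Disjoint R S) (hcl : ∀ x ∈ R, ∀ y, G.Adj x y → y ∈ R ∨ y ∈ S)
    (hd : ∀ C ∈ F, Disjoint C R) : IsFam G S (insert R F) ∧ (insert R F).card = F.card + 1 := by
  refine ⟨⟨?_, ?_⟩, ?_⟩
  · intro C hC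
    rcases Finset.mem_insert.1 hC with rfl | hC
    · exact ⟨hodd, hRS, hcl⟩
    · exact h.1 C hC
  · intro C hC D hD hne
    rcases Finset.mem_insert.1 hC with hC1 | hC1 <;>
      rcases Finset.mem_insert.1 hD with hD1 | hD1
    · exact absurd (hC1.trans hD1.symm) hne
    · rw [hC1]; exact (hd D hD1).symm
    · rw [hD1]; exact hd C hC1
    · exact h.2 C hC1 D hD1 hne
  · apply Finset.card_insert_of_notMem
    intro hR
    have := hd R hR
    rw [disjoint_self, Finset.bot_eq_empty] at this
    subst this
    simp at hodd

theorem IsFam.mono {α : Type*} {G : SimpleGraph α} {S T : Finset α}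
    {F : Finset (Finset α)} (h : IsFam G S F) (hST : S ⊆ T) (hT : ∀ C ∈ F, Disjoint C T) :
    IsFam G T F :=
  ⟨fun C hC => ⟨(h.1 C hC).1, hT C hC, fun x hx y hxy =>
    ((h.1 C hC).2.2 x hx y hxy).imp id (fun h => hST h)⟩, h.2⟩

theorem IsMaxFam.cover {α : Type*} [Fintype α] [DecidableEq α] {G : SimpleGraph α} {S : Finset α}
    {F : Finset (Finset α)} (h : IsMaxFam G S F) (a : α) : a ∈ S ∨ ∃ C ∈ F, a ∈ C := by
  classical
  by_contra hcon
  let R : Finset α := Finset.univ.filter (fun b => b ∉ S ∧ ∀ C ∈ F, b ∉ C)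
  have hR : ∀ b, b ∈ R ↔ b ∉ S ∧ ∀ C ∈ F, b ∉ C := by intro b; simp [R]
  have haR : a ∈ R := by
    rw [hR]; push Not at hcon; exact hcon
  have hRS : Disjoint R S := Finset.disjoint_left.2 fun b hb => ((hR b).1 hb).1
  have hd : ∀ C ∈ F, Disjoint C R := fun C hC =>
    Finset.disjoint_left.2 fun b hb hb' => ((hR b).1 hb').2 C hC hb
  have hcl : ∀ x ∈ R, ∀ y, G.Adj x y → y ∈ R ∨ y ∈ S := by
    intro x hx y hxy
    by_contra hy
    push Not at hy
    have : ∃ C ∈ F, y ∈ C := by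
      by_contra hno
      push Not at hno
      exact hy.1 ((hR y).2 ⟨hy.2, hno⟩)
    obtain ⟨C, hC, hyC⟩ := this
    have hx' := (hR x).1 hx
    rcases (h.1.1 C hC).2.2 y hyC x hxy.symm with h1 | h1
    · exact hx'.2 C hC h1
    · exact hx'.1 h1
  rcases Nat.even_or_odd R.card with he | ho
  · have hc := Finset.card_erase_add_one haR
    have haS : a ∉ S := ((hR a).1 haR).1
    have h1 : IsFam G (insert a S) F := by
      apply h.1.mono (Finset.subset_insert _ _)
      intro C hC
      rw [Finset.disjoint_insert_right]
      exact ⟨((hR a).1 haR).2 C hC, (h.1.1 C hC).2.1⟩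
    have h2 := h1.insert_set (R := R.erase a) (by
        rw [← hc] at he
        rcases Nat.even_or_odd (R.erase a).card with h | h
        · exact absurd he (by simp [Nat.even_add_one, h])
        · exact h)
      (by
        rw [Finset.disjoint_insert_right]
        exact ⟨by simp, hRS.mono_left (Finset.erase_subset _ _)⟩)
      (by
        intro x hx y hxy
        rcases hcl x (Finset.mem_of_mem_erase hx) y hxy with h | h
        · by_cases hya : y = a
          · right; simp [hya]
          · left; simp [hya, h]
        · right; simp [h])
      (fun C hC => (hd C hC).mono_right (Finset.erase_subset _ _))
    have h3 := h.2.2 _ _ h2.1 (by rw [h2.2, Finset.card_insert_of_notMem haS]; omega)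
    rw [Finset.card_insert_of_notMem haS] at h3
    omega
  · have h2 := h.1.insert_set ho hRS hcl hd
    have := h.2.1 _ _ h2.1
    rw [h2.2] at this
    omega

theorem fam_insert_rest {α : Type*} [Fintype α] [DecidableEq α] {G : SimpleGraph α}
    {U X : Finset α} {F : Finset (Finset α)} (hU : U ⊆ X)
    (h1 : ∀ C ∈ F, Odd C.card ∧ C ⊆ X \ U ∧ ∀ x ∈ C, ∀ y ∈ X \ U, G.Adj x y → y ∈ C)
    (h2 : ∀ C ∈ F, ∀ D ∈ F, C ≠ D → Disjoint C D) (h3 : U.card < F.card) (hX : Even X.card) :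
    ∃ F' : Finset (Finset α),
    (∀ C ∈ F', Odd C.card ∧ C ⊆ X \ U ∧ ∀ x ∈ C, ∀ y ∈ X \ U, G.Adj x y → y ∈ C) ∧
    (∀ C ∈ F', ∀ D ∈ F', C ≠ D → Disjoint C D) ∧ U.card + 2 ≤ F'.card := by
  classical
  by_cases hlt : U.card + 2 ≤ F.card
  · exact ⟨F, h1, h2, hlt⟩
  have heq : F.card = U.card + 1 := by omega
  let B := F.biUnion id
  have hBsub : B ⊆ X \ U := by
    intro a ha
    simp only [B, Finset.mem_biUnion, id] at ha
    obtain ⟨C, hC, haC⟩ := ha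
    exact (h1 C hC).2.1 haC
  have hBcard : B.card % 2 = F.card % 2 := by
    have : B.card = ∑ C ∈ F, C.card := Finset.card_biUnion h2
    rw [this, Finset.sum_nat_mod]
    rw [Finset.sum_congr rfl (fun C hC => Nat.odd_iff.1 (h1 C hC).1)]
    simp
  let R := (X \ U) \ B
  have hRcard : R.card + B.card = (X \ U).card := Finset.card_sdiff_add_card_eq_card hBsub
  have hXU : (X \ U).card + U.card = X.card := Finset.card_sdiff_add_card_eq_card hU
  have hRodd : Odd R.card := by
    rw [Nat.odd_iff]; rw [Nat.even_iff] at hX; omega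
  have hd : ∀ C ∈ F, Disjoint C R := by
    intro C hC
    rw [Finset.disjoint_left]
    intro a ha haR
    exact (Finset.mem_sdiff.1 haR).2 (Finset.mem_biUnion.2 ⟨C, hC, ha⟩)
  refine ⟨insert R F, ?_, ?_, ?_⟩
  · intro C hC
    rcases Finset.mem_insert.1 hC with rfl | hC
    · refine ⟨hRodd, Finset.sdiff_subset, ?_⟩
      intro x hx y hy hxy
      refine Finset.mem_sdiff.2 ⟨hy, fun hyB => ?_⟩
      obtain ⟨C, hC, hyC⟩ := Finset.mem_biUnion.1 hyB
      have := (h1 C hC).2.2 y hyC x (Finset.mem_sdiff.1 hx).1 hxy.symm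
      exact Finset.disjoint_left.1 (hd C hC) this hx
    · exact h1 C hC
  · intro C hC D hD hne
    rcases Finset.mem_insert.1 hC with hC1 | hC1 <;>
      rcases Finset.mem_insert.1 hD with hD1 | hD1
    · exact absurd (hC1.trans hD1.symm) hne
    · rw [hC1]; exact (hd D hD1).symm
    · rw [hD1]; exact hd C hC1
    · exact h2 C hC1 D hD1 hne
  · rw [Finset.card_insert_of_notMem]
    · omega
    · intro hR
      have := hd R hR
      rw [disjoint_self, Finset.bot_eq_empty] at this
      rw [this] at hRodd
      simp at hRodd

theorem IsMaxFam.critical {α : Type*} [Fintype α] [DecidableEq α] {G : SimpleGraph α}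
    {S : Finset α} {F : Finset (Finset α)} (h : IsMaxFam G S F) {C : Finset α} (hC : C ∈ F)
    {v : α} (hv : v ∈ C) : ∃ μ, PMOn G (C.erase v) μ := by
  classical
  by_contra hcon
  obtain ⟨U, hU, F1, a1, a2, a3⟩ := tutte_finset G _ hcon
  obtain ⟨hCodd, hCS, hCcl⟩ := h.1.1 C hC
  have hce := Finset.card_erase_add_one hv
  have hev : Even (C.erase v).card := by
    rw [Nat.even_iff]; rw [Nat.odd_iff] at hCodd; omega
  obtain ⟨F2, b1, b2, b3⟩ := fam_insert_rest hU a1 a2 a3 hev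
  have hUC : U ⊆ C := hU.trans (Finset.erase_subset _ _)
  have hvU : v ∉ U := fun h => by simpa using hU h
  have hF2C : ∀ D ∈ F2, D ⊆ C := fun D hD =>
    (b1 D hD).2.1.trans (Finset.sdiff_subset.trans (Finset.erase_subset _ _))
  let T := S ∪ insert v U
  have hTcard : T.card = S.card + (U.card + 1) := by
    rw [Finset.card_union_of_disjoint, Finset.card_insert_of_notMem hvU]
    rw [Finset.disjoint_right]
    intro x hx
    apply Finset.disjoint_left.1 hCS
    rcases Finset.mem_insert.1 hx with rfl | hx
    · exact hv
    · exact hUC hx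
  have hFe := Finset.card_erase_add_one hC
  have hcross : ∀ D ∈ F.erase C, ∀ E ∈ F2, Disjoint D E := by
    intro D hD E hE
    have := h.1.2 D (Finset.mem_of_mem_erase hD) C hC (Finset.ne_of_mem_erase hD)
    exact this.mono_right (hF2C E hE)
  have hFcard : (F.erase C ∪ F2).card = (F.erase C).card + F2.card := by
    apply Finset.card_union_of_disjoint
    rw [Finset.disjoint_left]
    intro D hD hD2
    have := hcross D hD D hD2
    rw [disjoint_self, Finset.bot_eq_empty] at this
    have h0 := (b1 D hD2).1
    rw [this] at h0
    simp at h0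
  have hfam : IsFam G T (F.erase C ∪ F2) := by
    refine ⟨?_, ?_⟩
    · intro D hD
      rcases Finset.mem_union.1 hD with hD | hD
      · obtain ⟨c1, c2, c3⟩ := h.1.1 D (Finset.mem_of_mem_erase hD)
        refine ⟨c1, ?_, fun x hx y hxy => (c3 x hx y hxy).imp id
          (fun h => Finset.mem_union_left _ h)⟩
        rw [Finset.disjoint_union_right]
        refine ⟨c2, ?_⟩
        refine (h.1.2 D (Finset.mem_of_mem_erase hD) C hC (Finset.ne_of_mem_erase hD)).mono_right ?_
        exact Finset.insert_subset hv hUC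
      · obtain ⟨c1, c2, c3⟩ := b1 D hD
        refine ⟨c1, ?_, ?_⟩
        · rw [Finset.disjoint_left]
          intro x hx hxT
          have hx2 := c2 hx
          simp only [Finset.mem_sdiff, Finset.mem_erase] at hx2
          simp only [T, Finset.mem_union, Finset.mem_insert] at hxT
          rcases hxT with h | h | h
          · exact Finset.disjoint_left.1 hCS hx2.1.2 h
          · exact hx2.1.1 h
          · exact hx2.2 h
        · intro x hx y hxy
          rcases hCcl x (hF2C D hD hx) y hxy with hy | hy
          · by_cases hyv : y = v
            · right; simp [T, hyv]
            by_cases hyU : y ∈ U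
            · right; simp [T, hyU]
            left
            exact c3 x hx y (by simp [hy, hyv, hyU]) hxy
          · right; simp [T, hy]
    · intro D hD E hE hne
      rcases Finset.mem_union.1 hD with hD | hD <;> rcases Finset.mem_union.1 hE with hE | hE
      · exact h.1.2 D (Finset.mem_of_mem_erase hD) E (Finset.mem_of_mem_erase hE) hne
      · exact hcross D hD E hE
      · exact (hcross E hE D hD).symm
      · exact b2 D hD E hE hne
  have k1 := h.2.1 _ _ hfam
  have k2 := h.2.2 _ _ hfam (by omega)
  omega

/-- `μ` is a perfect matching of `C` minus the vertex `b`, extended by `μ b = b`. -/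
def NPM {α : Type*} (G : SimpleGraph α) (C : Finset α) (b : α) (μ : α → α) : Prop :=
  b ∈ C ∧ μ b = b ∧ ∀ x ∈ C, x ≠ b → μ x ∈ C ∧ μ x ≠ b ∧ μ (μ x) = x ∧ G.Adj x (μ x)

theorem NPM.of_PMOn {α : Type*} [DecidableEq α] {G : SimpleGraph α} {C : Finset α} {b : α}
    (hb : b ∈ C) {μ : α → α} (h : PMOn G (C.erase b) μ) :
    NPM G C b (fun x => if x = b then b else μ x) := by
  refine ⟨hb, by simp, ?_⟩
  intro x hx hxb
  obtain ⟨h1, h2, h3⟩ := h x (by simp [hx, hxb])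
  rw [Finset.mem_erase] at h1
  simp [hxb, h1.1, h1.2, h2, h3]

theorem NPM.pmOn {α : Type*} {G : SimpleGraph α} {C : Finset α} {b : α}
    {μ : α → α} (h : NPM G C b μ) {X : Finset α} (hX : X ⊆ C) (hb : b ∉ X)
    (hcl : ∀ x ∈ X, μ x ∈ X) : PMOn G X μ := by
  intro x hx
  obtain ⟨_, _, h3, h4⟩ := h.2.2 x (hX hx) (by rintro rfl; exact hb hx)
  exact ⟨hcl x hx, h3, h4⟩

theorem NPM.adj_mate {α : Type*} [DecidableEq α] {G : SimpleGraph α} {C : Finset α} {b : α}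
    {μ : α → α} (h : NPM G C b μ) (hbad : ¬ GoodSet G C) {x : α} (hx : x ∈ C) (hbx : G.Adj b x) :
    G.Adj b (μ x) := by
  by_contra hcon
  apply hbad
  obtain ⟨hb, hbb, hm⟩ := id h
  have hxb : x ≠ b := hbx.ne'
  obtain ⟨m1, m2, m3, m4⟩ := hm x hx hxb
  have hg : GoodSet G (C \ {b, x, μ x}) := by
    apply PMOn.good (μ := μ)
    apply h.pmOn Finset.sdiff_subset (by simp)
    intro y hy
    simp only [Finset.mem_sdiff, Finset.mem_insert, Finset.mem_singleton, not_or] at hy ⊢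
    obtain ⟨hyC, y1, y2, y3⟩ := hy
    obtain ⟨k1, k2, k3, k4⟩ := hm y hyC y1
    refine ⟨k1, k2, ?_, ?_⟩
    · intro he; rw [he] at k3; exact y3 k3.symm
    · intro he; rw [he, m3] at k3; exact y2 k3.symm
  have := GoodSet.three hbx m4 hcon m2.symm (by simp) (by simp) (by simp) hg
  convert this using 1
  ext y
  simp only [Finset.mem_insert, Finset.mem_sdiff, Finset.mem_singleton]
  grind

/-- Move the exposed vertex from `b` to its neighbour `x`. -/
def mvMate {α : Type*} [DecidableEq α] (μ : α → α) (b x : α) : α → α :=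
  fun v => if v = x then x else if v = b then μ x else if v = μ x then b else μ v

theorem NPM.move {α : Type*} [DecidableEq α] {G : SimpleGraph α} {C : Finset α} {b : α}
    {μ : α → α} (h : NPM G C b μ) (hbad : ¬ GoodSet G C) {x : α} (hx : x ∈ C) (hbx : G.Adj b x) :
    NPM G C x (mvMate μ b x) := by
  have hbm := h.adj_mate hbad hx hbx
  have hbm' := hbm.symm
  obtain ⟨hb, hbb, hm⟩ := id h
  have hxb : x ≠ b := hbx.ne'
  obtain ⟨m1, m2, m3, m4⟩ := hm x hx hxb
  have m4' := m4.ne'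
  refine ⟨hx, by simp [mvMate], ?_⟩
  intro y hy hyx
  unfold mvMate
  by_cases hyb : y = b
  · subst hyb
    simp [hyx, m1, m4', m2, hbm]
  · by_cases hym : y = μ x
    · subst hym
      simp [hb, hbm', hyx, hyb, hxb.symm]
    · obtain ⟨k1, k2, k3, k4⟩ := hm y hy hyb
      have q1 : μ y ≠ x := by intro he; rw [he] at k3; exact hym k3.symm
      have q2 : μ y ≠ μ x := by intro he; rw [he, m3] at k3; exact hyx k3.symm
      simp [hyx, hyb, hym, q1, q2, k1, k2, k3, k4]

theorem NPM.adj_mate_two {α : Type*} [DecidableEq α] {G : SimpleGraph α} {C : Finset α} {b : α}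
    {μ : α → α} (h : NPM G C b μ) (hbad : ¬ GoodSet G C) {x y : α} (hx : x ∈ C) (hy : y ∈ C)
    (hbx : G.Adj b x) (hby : G.Adj b y) (hxy : G.Adj x y) (hne : y ≠ μ x) : G.Adj x (μ y) := by
  have h1 := (h.move hbad hx hbx).adj_mate hbad hy hxy
  have h2 : y ≠ x := hxy.ne'
  have h3 : y ≠ b := hby.ne'
  simpa [mvMate, h2, h3, hne] using h1

theorem NPM.trans_nbr {α : Type*} [DecidableEq α] {G : SimpleGraph α} {C : Finset α} {b : α}
    {μ : α → α} (h : NPM G C b μ) (hbad : ¬ GoodSet G C) {x y z : α} (hx : x ∈ C) (hy : y ∈ C)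
    (hz : z ∈ C) (hbx : G.Adj b x) (hby : G.Adj b y) (hbz : G.Adj b z) (hxy : G.Adj x y)
    (hyz : G.Adj y z) (hxz : x ≠ z) : G.Adj x z := by
  obtain ⟨hb, hbb, hm⟩ := id h
  have xb : x ≠ b := hbx.ne'
  have yb : y ≠ b := hby.ne'
  have zb : z ≠ b := hbz.ne'
  obtain ⟨x1, x2, x3, x4⟩ := hm x hx xb
  obtain ⟨y1, y2, y3, y4⟩ := hm y hy yb
  obtain ⟨z1, z2, z3, z4⟩ := hm z hz zb
  by_cases c1 : z = μ x
  · rw [c1]; exact x4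
  by_cases c2 : y = μ x
  · have : G.Adj z (μ y) := by
      apply h.adj_mate_two hbad hz hy hbz hby hyz.symm
      intro he
      apply hxz
      rw [← x3, ← z3, ← c2, ← he]
    rw [c2, x3] at this
    exact this.symm
  by_cases c3 : z = μ y
  · rw [c3]; exact h.adj_mate_two hbad hx hy hbx hby hxy c2
  by_contra hcon
  apply hbad
  have hbx' : G.Adj b (μ x) := h.adj_mate hbad hx hbx
  have hbz' : G.Adj b (μ z) := h.adj_mate hbad hz hbz
  have hyz' : G.Adj y (μ z) := h.adj_mate_two hbad hy hz hby hbz hyz c3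
  have hz'y' : G.Adj (μ z) (μ y) := by
    apply h.adj_mate_two hbad z1 hy hbz' hby hyz'.symm
    rw [z3]; exact hyz.ne
  have xy := hxy.ne
  have yz := hyz.ne
  have ex : ∀ w ∈ C, w ≠ b → ∀ v, μ w = v → w = μ v := by
    intro w hw hwb v hv; rw [← hv, (hm w hw hwb).2.2.1]
  have e1 := ex x hx xb
  have e2 := ex y hy yb
  have e3 := ex z hz zb
  have n1 := x4.ne
  have n2 := y4.ne
  have n3 := z4.ne
  have p1 : μ x ≠ μ y := fun he => xy (by rw [e1 _ he, y3])
  have p2 : μ x ≠ μ z := fun he => hxz (by rw [e1 _ he, z3])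
  have p3 : μ y ≠ μ z := fun he => yz (by rw [e2 _ he, z3])
  have q1 : μ x ≠ y := fun he => c2 he.symm
  have q2 : μ x ≠ z := fun he => c1 he.symm
  have q3 : μ y ≠ x := fun he => c2 (e2 _ he)
  have q4 : μ y ≠ z := fun he => c3 he.symm
  have q5 : μ z ≠ x := fun he => c1 (e3 _ he)
  have q6 : μ z ≠ y := fun he => c3 (e3 _ he)
  have hg : GoodSet G (C \ {b, x, y, z, μ x, μ y, μ z}) := by
    apply PMOn.good (μ := μ)
    apply h.pmOn Finset.sdiff_subset (by simp)
    intro w hw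
    simp only [Finset.mem_sdiff, Finset.mem_insert, Finset.mem_singleton, not_or] at hw ⊢
    obtain ⟨hwC, w0, w1, w2, w3, w4, w5, w6⟩ := hw
    obtain ⟨k1, k2, k3, k4⟩ := hm w hwC w0
    have e := ex w hwC w0
    refine ⟨k1, k2, fun he => w4 (e _ he), fun he => w5 (e _ he), fun he => w6 (e _ he),
      fun he => w1 ?_, fun he => w2 ?_, fun he => w3 ?_⟩
    · rw [e _ he, x3]
    · rw [e _ he, y3]
    · rw [e _ he, z3]
  have g1 := GoodSet.edge hbx' (by simp) (by simp) hg
  have g2 := GoodSet.edge hz'y' (by simp [z2, Ne.symm p2]) (by simp [y2, Ne.symm p1]) g1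
  have g3 := GoodSet.three hxy hyz hcon hxz (by simp [xb, q3.symm, q5.symm, n1])
    (by simp [yb, q1.symm, q6.symm, n2]) (by simp [zb, q2.symm, q4.symm, n3]) g2
  convert g3 using 1
  ext w
  simp only [Finset.mem_insert, Finset.mem_sdiff, Finset.mem_singleton]
  grind

open Classical in
/-- The clique of `C` spanned by an edge. -/
noncomputable def cl {α : Type*} (G : SimpleGraph α) (C : Finset α) (x y : α) : Finset α :=
  C.filter (fun z => z = x ∨ z = y ∨ (G.Adj z x ∧ G.Adj z y))

theorem mem_cl {α : Type*} {G : SimpleGraph α} {C : Finset α} {x y z : α} :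
    z ∈ cl G C x y ↔ z ∈ C ∧ (z = x ∨ z = y ∨ (G.Adj z x ∧ G.Adj z y)) := by
  simp [cl]

/-- No induced diamond inside `C`. -/
def DiamondFree {α : Type*} (G : SimpleGraph α) (C : Finset α) : Prop :=
  ∀ b ∈ C, ∀ y ∈ C, ∀ x ∈ C, ∀ z ∈ C, G.Adj b y → G.Adj b x → G.Adj y x → G.Adj b z → G.Adj y z →
    x ≠ z → G.Adj x z

theorem cl_adj {α : Type*} {G : SimpleGraph α} {C : Finset α} (hD : DiamondFree G C) {x y u w : α}
    (hx : x ∈ C) (hy : y ∈ C) (hxy : G.Adj x y) (hu : u ∈ cl G C x y) (hw : w ∈ cl G C x y)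
    (huw : u ≠ w) : G.Adj u w := by
  rw [mem_cl] at hu hw
  obtain ⟨huC, hu⟩ := hu
  obtain ⟨hwC, hw⟩ := hw
  rcases hu with rfl | rfl | ⟨u1, u2⟩ <;> rcases hw with rfl | rfl | ⟨w1, w2⟩
  · exact absurd rfl huw
  · exact hxy
  · exact w1.symm
  · exact hxy.symm
  · exact absurd rfl huw
  · exact w2.symm
  · exact u1
  · exact u2
  · exact hD x hx y hy u huC w hwC hxy u1.symm u2.symm w1.symm w2.symm huw

theorem cl_subset {α : Type*} {G : SimpleGraph α} {C : Finset α} (hD : DiamondFree G C)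
    {x y u w : α} (hx : x ∈ C) (hy : y ∈ C) (hxy : G.Adj x y) (hu : u ∈ cl G C x y)
    (hw : w ∈ cl G C x y) : cl G C x y ⊆ cl G C u w := by
  intro z hz
  have hzC := (mem_cl.1 hz).1
  rw [mem_cl]
  refine ⟨hzC, ?_⟩
  by_cases h1 : z = u
  · exact Or.inl h1
  by_cases h2 : z = w
  · exact Or.inr (Or.inl h2)
  exact Or.inr (Or.inr ⟨cl_adj hD hx hy hxy hz hu h1, cl_adj hD hx hy hxy hz hw h2⟩)

theorem cl_eq {α : Type*} {G : SimpleGraph α} {C : Finset α} (hD : DiamondFree G C)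
    {x y u w : α} (hx : x ∈ C) (hy : y ∈ C) (hxy : G.Adj x y) (hu : u ∈ cl G C x y)
    (hw : w ∈ cl G C x y) (huw : u ≠ w) : cl G C u w = cl G C x y := by
  have huw' := cl_adj hD hx hy hxy hu hw huw
  have h1 := cl_subset hD hx hy hxy hu hw
  have huC := (mem_cl.1 hu).1
  have hwC := (mem_cl.1 hw).1
  have hx' : x ∈ cl G C x y := mem_cl.2 ⟨hx, Or.inl rfl⟩
  have hy' : y ∈ cl G C x y := mem_cl.2 ⟨hy, Or.inr (Or.inl rfl)⟩
  exact Finset.Subset.antisymm (cl_subset hD huC hwC huw' (h1 hx') (h1 hy')) h1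

open Classical in
/-- Number of vertices whose matching edge spans the clique `Q`. -/
noncomputable def cnt {α : Type*} (G : SimpleGraph α) (C : Finset α) (b : α) (μ : α → α)
    (Q : Finset α) : ℕ := (C.filter (fun v => v ≠ b ∧ cl G C v (μ v) = Q)).card

theorem cnt_move {α : Type*} [DecidableEq α] {G : SimpleGraph α} {C : Finset α}
    (hD : DiamondFree G C) {b : α}
    {μ : α → α} (h : NPM G C b μ) (hbad : ¬ GoodSet G C) {x : α} (hx : x ∈ C) (hbx : G.Adj b x)
    (Q : Finset α) : cnt G C x (mvMate μ b x) Q = cnt G C b μ Q := by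
  symm
  unfold cnt
  have hbm := h.adj_mate hbad hx hbx
  obtain ⟨hb, hbb, hm⟩ := id h
  have hxb : x ≠ b := hbx.ne'
  obtain ⟨m1, m2, m3, m4⟩ := hm x hx hxb
  have hbmem : b ∈ cl G C x (μ x) := mem_cl.2 ⟨hb, Or.inr (Or.inr ⟨hbx, hbm⟩)⟩
  have hmmem : μ x ∈ cl G C x (μ x) := mem_cl.2 ⟨m1, Or.inr (Or.inl rfl)⟩
  have hxmem : x ∈ cl G C x (μ x) := mem_cl.2 ⟨hx, Or.inl rfl⟩
  have e1 : cl G C b (μ x) = cl G C x (μ x) := cl_eq hD hx m1 m4 hbmem hmmem hbm.ne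
  have e2 : cl G C (μ x) b = cl G C x (μ x) := cl_eq hD hx m1 m4 hmmem hbmem hbm.ne'
  have e3 : cl G C (μ x) x = cl G C x (μ x) := cl_eq hD hx m1 m4 hmmem hxmem m4.ne'
  apply Finset.card_equiv (Equiv.swap b x)
  intro w
  simp only [Finset.mem_filter]
  by_cases w1 : w = b
  · subst w1; simp
  by_cases w2 : w = x
  · subst w2
    simp [mvMate, hb, hx, hxb, hxb.symm, e1]
  rw [Equiv.swap_apply_of_ne_of_ne w1 w2]
  by_cases w3 : w = μ x
  · subst w3
    simp [mvMate, w1, w2, m3, e2, e3]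
  · simp [mvMate, w1, w2, w3]

/-- Vertices of a factor-critical set are mutually reachable inside it. -/
theorem critical_reach {α : Type*} [DecidableEq α] {G : SimpleGraph α} {C : Finset α}
    (hcrit : ∀ b ∈ C, ∃ μ, NPM G C b μ) {b c : α} (hb : b ∈ C) (hc : c ∈ C) :
    Relation.ReflTransGen (fun x y => y ∈ C ∧ G.Adj x y) b c := by
  classical
  by_contra hcon
  let R := C.filter (fun v => Relation.ReflTransGen (fun x y => y ∈ C ∧ G.Adj x y) b v)
  have hR : ∀ v, v ∈ R ↔ v ∈ C ∧ Relation.ReflTransGen (fun x y => y ∈ C ∧ G.Adj x y) b v := by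
    intro v; simp [R]
  have hbR : b ∈ R := (hR b).2 ⟨hb, Relation.ReflTransGen.refl⟩
  have hcR : c ∉ R := fun h => hcon ((hR c).1 h).2
  have hRC : R ⊆ C := Finset.filter_subset _ _
  have hstep : ∀ v ∈ R, ∀ w ∈ C, G.Adj v w → w ∈ R := by
    intro v hv w hw hvw
    exact (hR w).2 ⟨hw, ((hR v).1 hv).2.tail ⟨hw, hvw⟩⟩
  obtain ⟨μ, hμ⟩ := hcrit c hc
  have h1 : PMOn G R μ := by
    apply hμ.pmOn hRC hcR
    intro v hv
    obtain ⟨k1, k2, k3, k4⟩ := hμ.2.2 v (hRC hv) (by rintro rfl; exact hcR hv)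
    exact hstep v hv _ k1 k4
  obtain ⟨ν, hν⟩ := hcrit b hb
  have h2 : PMOn G (R.erase b) ν := by
    apply hν.pmOn ((Finset.erase_subset _ _).trans hRC) (by simp)
    intro v hv
    rw [Finset.mem_erase] at hv ⊢
    obtain ⟨k1, k2, k3, k4⟩ := hν.2.2 v (hRC hv.2) hv.1
    exact ⟨k2, hstep v hv.2 _ k1 k4⟩
  have a1 := h1.even
  have a2 := h2.even
  have a3 := Finset.card_erase_add_one hbR
  rw [Nat.even_iff] at a1 a2
  omega

theorem cnt_transport {α : Type*} [DecidableEq α] {G : SimpleGraph α} {C : Finset α}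
    (hD : DiamondFree G C) {b c : α} {μ : α → α} (h : NPM G C b μ) (hbad : ¬ GoodSet G C)
    (hbc : Relation.ReflTransGen (fun x y => y ∈ C ∧ G.Adj x y) b c) :
    ∃ ν, NPM G C c ν ∧ ∀ Q, cnt G C c ν Q = cnt G C b μ Q := by
  induction hbc with
  | refl => exact ⟨μ, h, fun _ => rfl⟩
  | @tail x y _ hxy ih =>
    obtain ⟨ν, hν, hc⟩ := ih
    exact ⟨mvMate ν x y, hν.move hbad hxy.1 hxy.2, fun Q => by
      rw [cnt_move hD hν hbad hxy.1 hxy.2, hc]⟩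

open Classical in
/-- The number of (ordered) edges inside a bad factor-critical set. -/
theorem darts_bound {α : Type*} {G : SimpleGraph α} {C : Finset α} {r : ℕ}
    (hcrit : ∀ b ∈ C, ∃ μ, NPM G C b μ) (hbad : ¬ GoodSet G C)
    (hcl : ∀ Q ⊆ C, (∀ u ∈ Q, ∀ w ∈ Q, u ≠ w → G.Adj u w) → Q.card ≤ r) {b : α} (hb : b ∈ C) :
    ∑ v ∈ C, (C.filter (fun w => G.Adj v w)).card ≤ r * (C.erase b).card := by
  have hD : DiamondFree G C := by
    intro b hb y hy x hx z hz h1 h2 h3 h4 h5 h6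
    obtain ⟨μ, hμ⟩ := hcrit b hb
    exact hμ.trans_nbr hbad hx hy hz h2 h1 h4 h3.symm h5 h6
  obtain ⟨μ, hμ⟩ := hcrit b hb
  let darts : Finset (α × α) := (C ×ˢ C).filter (fun p => G.Adj p.1 p.2)
  have hdarts : ∀ p, p ∈ darts ↔ (p.1 ∈ C ∧ p.2 ∈ C) ∧ G.Adj p.1 p.2 := by
    intro p; simp [darts]
  have h1 : ∑ v ∈ C, (C.filter (fun w => G.Adj v w)).card = darts.card := by
    simp only [darts, Finset.card_filter, Finset.sum_product]
  rw [h1]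
  let I := darts.image (fun p => cl G C p.1 p.2)
  have h2 : darts.card = ∑ Q ∈ I, (darts.filter (fun p => cl G C p.1 p.2 = Q)).card :=
    Finset.card_eq_sum_card_image _ _
  have h3 : (C.erase b).card =
      ∑ Q ∈ I, ((C.erase b).filter (fun v => cl G C v (μ v) = Q)).card := by
    apply Finset.card_eq_sum_card_fiberwise
    intro v hv
    have hv := Finset.mem_erase.1 (Finset.mem_coe.1 hv)
    obtain ⟨k1, k2, k3, k4⟩ := hμ.2.2 v hv.2 hv.1
    exact Finset.mem_coe.2 (Finset.mem_image.2 ⟨(v, μ v), (hdarts _).2 ⟨⟨hv.2, k1⟩, k4⟩, rfl⟩)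
  rw [h2, h3, Finset.mul_sum]
  apply Finset.sum_le_sum
  intro Q hQ
  obtain ⟨⟨u, w⟩, huw, hQe⟩ := Finset.mem_image.1 hQ
  obtain ⟨⟨huC, hwC⟩, hadj⟩ := (hdarts _).1 huw
  simp only at huC hwC hadj hQe
  have huQ : u ∈ Q := by rw [← hQe]; exact mem_cl.2 ⟨huC, Or.inl rfl⟩
  have hQC : Q ⊆ C := by rw [← hQe]; exact Finset.filter_subset _ _
  have hQr : Q.card ≤ r := by
    apply hcl Q hQC
    intro x hx y hy hxy
    rw [← hQe] at hx hy
    exact cl_adj hD huC hwC hadj hx hy hxy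
  have hA : (darts.filter (fun p => cl G C p.1 p.2 = Q)).card ≤ Q.card * (Q.erase u).card := by
    have hsub : darts.filter (fun p => cl G C p.1 p.2 = Q) ⊆ Q.offDiag := by
      rintro ⟨x, y⟩ hp
      obtain ⟨hp1, hp2⟩ := Finset.mem_filter.1 hp
      obtain ⟨⟨hx, hy⟩, hxy⟩ := (hdarts _).1 hp1
      simp only at hp2 hx hy hxy
      rw [Finset.mem_offDiag]
      refine ⟨?_, ?_, hxy.ne⟩
      · rw [← hp2]; exact mem_cl.2 ⟨hx, Or.inl rfl⟩
      · rw [← hp2]; exact mem_cl.2 ⟨hy, Or.inr (Or.inl rfl)⟩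
    refine (Finset.card_le_card hsub).trans ?_
    rw [Finset.offDiag_card, Finset.card_erase_of_mem huQ, Nat.mul_sub, mul_one]
  have hB : (Q.erase u).card ≤ ((C.erase b).filter (fun v => cl G C v (μ v) = Q)).card := by
    obtain ⟨ν, hν, hc⟩ := cnt_transport hD hμ hbad (critical_reach hcrit hb huC)
    have e1 : ((C.erase b).filter (fun v => cl G C v (μ v) = Q)).card = cnt G C b μ Q := by
      unfold cnt
      congr 1
      ext v
      simp only [Finset.mem_filter, Finset.mem_erase]
      tauto
    rw [e1, ← hc Q]
    unfold cnt
    apply Finset.card_le_card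
    intro v hv
    obtain ⟨hvu, hvQ⟩ := Finset.mem_erase.1 hv
    have hvC := hQC hvQ
    obtain ⟨k1, k2, k3, k4⟩ := hν.2.2 v hvC hvu
    rw [Finset.mem_filter]
    refine ⟨hvC, hvu, ?_⟩
    rw [← hQe] at hvQ huQ ⊢
    have huv : G.Adj u v := cl_adj hD huC hwC hadj huQ hvQ hvu.symm
    have hum := hν.adj_mate hbad hvC huv
    have e2 := cl_eq hD huC hwC hadj huQ hvQ hvu.symm
    rw [← e2]
    apply cl_eq hD huC hvC huv (mem_cl.2 ⟨hvC, Or.inr (Or.inl rfl)⟩)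
      (mem_cl.2 ⟨k1, Or.inr (Or.inr ⟨hum.symm, k4.symm⟩)⟩) k4.ne
  calc _ ≤ Q.card * (Q.erase u).card := hA
    _ ≤ r * _ := Nat.mul_le_mul hQr hB

open Classical in
theorem boundary_bound {α : Type*} [Fintype α] {G : SimpleGraph α} {C : Finset α} {r : ℕ}
    (hdeg : ∀ v, (Finset.univ.filter (fun w => G.Adj v w)).card = r)
    (hne : C.Nonempty)
    (hcrit : ∀ b ∈ C, ∃ μ, NPM G C b μ) (hbad : ¬ GoodSet G C)
    (hcl : ∀ Q ⊆ C, (∀ u ∈ Q, ∀ w ∈ Q, u ≠ w → G.Adj u w) → Q.card ≤ r) :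
    r ≤ ∑ v ∈ C, (Finset.univ.filter (fun w => G.Adj v w ∧ w ∉ C)).card := by
  obtain ⟨b, hb⟩ := hne
  have h1 := darts_bound hcrit hbad hcl hb
  have h2 : ∀ v ∈ C, r = (C.filter (fun w => G.Adj v w)).card +
      (Finset.univ.filter (fun w => G.Adj v w ∧ w ∉ C)).card := by
    intro v _
    rw [← hdeg v, ← Finset.card_filter_add_card_filter_not (s := Finset.univ.filter
      (fun w => G.Adj v w)) (fun w => w ∈ C), Finset.filter_filter, Finset.filter_filter]
    congr 2
    ext w
    simp [and_comm]
  have h3 : ∑ v ∈ C, r = _ := Finset.sum_congr rfl h2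
  rw [Finset.sum_add_distrib, Finset.sum_const, smul_eq_mul] at h3
  have h4 := Finset.card_erase_add_one hb
  rw [← h4] at h3
  have h5 : ((C.erase b).card + 1) * r = r * (C.erase b).card + r := by ring
  omega

open Classical in
theorem good_univ {α : Type*} [Fintype α] {G : SimpleGraph α} {r : ℕ} (hr : 0 < r)
    (hdeg : ∀ v, (Finset.univ.filter (fun w => G.Adj v w)).card = r)
    (hcl : ∀ C : Finset α, Odd C.card → ∀ Q ⊆ C,
      (∀ u ∈ Q, ∀ w ∈ Q, u ≠ w → G.Adj u w) → Q.card ≤ r) :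
    GoodSet G (Finset.univ : Finset α) := by
  obtain ⟨S, F, hmax⟩ := exists_maxFam G
  have hSF : S.card ≤ F.card := by
    have := hmax.2.1 ∅ ∅ (by simp [IsFam])
    simpa using this
  obtain ⟨d, hd⟩ := Nat.exists_eq_add_of_le hSF
  let t : {C // C ∈ F} → Finset (α ⊕ Fin d) := fun C =>
    (S.filter (fun s => ∃ x ∈ C.1, G.Adj x s)).disjSum (if GoodSet G C.1 then Finset.univ else ∅)
  have ht1 : ∀ C s, Sum.inl s ∈ t C ↔ s ∈ S ∧ ∃ x ∈ C.1, G.Adj x s := by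
    intro C s; simp [t]
  have ht2 : ∀ C i, Sum.inr i ∈ t C ↔ GoodSet G C.1 := by
    intro C i
    by_cases h : GoodSet G C.1 <;> simp [t, h]
  have hall : ∀ Y : Finset {C // C ∈ F}, Y.card ≤ (Y.biUnion t).card := by
    intro Y
    let T := S.filter (fun s => ∃ C ∈ Y, ∃ x ∈ C.1, G.Adj x s)
    let Y' : Finset (Finset α) := Y.map (Function.Embedding.subtype _)
    have hY'c : Y'.card = Y.card := Finset.card_map _
    have hY'F : ∀ C ∈ Y', C ∈ F := by
      intro C hC
      obtain ⟨D, hD, rfl⟩ := Finset.mem_map.1 hC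
      exact D.2
    have hTmem : ∀ C ∈ Y', ∀ x ∈ C, ∀ s ∈ S, G.Adj x s → s ∈ T := by
      intro C hC x hx s hs hxs
      obtain ⟨D, hD, rfl⟩ := Finset.mem_map.1 hC
      exact Finset.mem_filter.2 ⟨hs, D, hD, x, hx, hxs⟩
    have hfam : IsFam G T Y' := by
      refine ⟨?_, fun C hC D hD => hmax.1.2 C (hY'F C hC) D (hY'F D hD)⟩
      intro C hC
      obtain ⟨c1, c2, c3⟩ := hmax.1.1 C (hY'F C hC)
      refine ⟨c1, c2.mono_right (Finset.filter_subset _ _), ?_⟩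
      intro x hx y hxy
      exact (c3 x hx y hxy).imp id (fun h => hTmem C hC x hx y h hxy)
    by_cases hgood : ∃ C ∈ Y, GoodSet G C.1
    · obtain ⟨C0, hC0, hg0⟩ := hgood
      have h1 := hmax.2.1 _ _ hfam
      have h2 : T.disjSum (Finset.univ : Finset (Fin d)) ⊆ Y.biUnion t := by
        intro a ha
        rw [Finset.mem_biUnion]
        rcases a with s | i
        · have hs : s ∈ T := by simpa using ha
          obtain ⟨hsS, C, hC, hx⟩ := Finset.mem_filter.1 hs
          exact ⟨C, hC, (ht1 _ _).2 ⟨hsS, hx⟩⟩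
        · exact ⟨C0, hC0, (ht2 _ _).2 hg0⟩
      have h3 := Finset.card_le_card h2
      rw [Finset.card_disjSum, Finset.card_univ, Fintype.card_fin] at h3
      omega
    · push Not at hgood
      have h2 : T.map Function.Embedding.inl ⊆ Y.biUnion t := by
        intro a ha
        obtain ⟨s, hs, rfl⟩ := Finset.mem_map.1 ha
        rw [Finset.mem_biUnion]
        obtain ⟨hsS, C, hC, hx⟩ := Finset.mem_filter.1 hs
        exact ⟨C, hC, (ht1 _ _).2 ⟨hsS, hx⟩⟩
      have h3 := Finset.card_le_card h2
      rw [Finset.card_map] at h3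
      refine le_trans ?_ h3
      rw [← hY'c]
      have hb : ∀ C ∈ Y', r ≤ ∑ v ∈ C, (T.filter (fun w => G.Adj v w)).card := by
        intro C hC
        obtain ⟨c1, c2, c3⟩ := hfam.1 C hC
        have hne : C.Nonempty := by
          rw [← Finset.card_pos]; exact c1.pos
        have hcrit : ∀ b ∈ C, ∃ μ, NPM G C b μ := by
          intro b hb
          obtain ⟨μ, hμ⟩ := hmax.critical (hY'F C hC) hb
          exact ⟨_, NPM.of_PMOn hb hμ⟩
        have hbad : ¬ GoodSet G C := by
          obtain ⟨D, hD, rfl⟩ := Finset.mem_map.1 hC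
          exact hgood D hD
        refine (boundary_bound hdeg hne hcrit hbad (hcl C c1)).trans ?_
        apply Finset.sum_le_sum
        intro v hv
        apply Finset.card_le_card
        intro w hw
        obtain ⟨_, hvw, hwC⟩ := Finset.mem_filter.1 hw
        exact Finset.mem_filter.2 ⟨(c3 v hv w hvw).resolve_left hwC, hvw⟩
      have h4 : Y'.card * r ≤ T.card * r := by
        calc Y'.card * r = ∑ C ∈ Y', r := by simp
          _ ≤ ∑ C ∈ Y', ∑ v ∈ C, (T.filter (fun w => G.Adj v w)).card := Finset.sum_le_sum hb
          _ = ∑ v ∈ Y'.biUnion id, (T.filter (fun w => G.Adj v w)).card := by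
            rw [Finset.sum_biUnion]
            · rfl
            · intro C hC D hD hne
              exact hfam.2 C hC D hD hne
          _ = ∑ w ∈ T, ((Y'.biUnion id).filter (fun v => G.Adj v w)).card :=
            Finset.sum_card_bipartiteAbove_eq_sum_card_bipartiteBelow _
          _ ≤ ∑ w ∈ T, r := by
            apply Finset.sum_le_sum
            intro w _
            rw [← hdeg w]
            apply Finset.card_le_card
            intro v hv
            obtain ⟨_, hv⟩ := Finset.mem_filter.1 hv
            exact Finset.mem_filter.2 ⟨Finset.mem_univ _, hv.symm⟩
          _ = T.card * r := by simp
      exact Nat.le_of_mul_le_mul_right h4 hr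
  obtain ⟨f, hinj, hf⟩ := (Finset.all_card_le_biUnion_card_iff_exists_injective t).1 hall
  have himg : Finset.univ.image f = S.disjSum (Finset.univ : Finset (Fin d)) := by
    apply Finset.eq_of_subset_of_card_le
    · intro a ha
      obtain ⟨C, _, rfl⟩ := Finset.mem_image.1 ha
      have := hf C
      rcases h : f C with s | i
      · rw [h, ht1] at this
        simpa using this.1
      · simp
    · rw [Finset.card_image_of_injective _ hinj, Finset.card_disjSum, Finset.card_univ,
        Finset.card_univ, Fintype.card_fin, Fintype.card_coe]
      omega
  let g : {C // C ∈ F} → Finset α := fun C => C.1 ∪ S.filter (fun s => f C = Sum.inl s)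
  have hgood : ∀ C ∈ (Finset.univ : Finset {C // C ∈ F}), GoodSet G (g C) := by
    intro C _
    have hC := hf C
    rcases h : f C with s | i
    · rw [h, ht1] at hC
      obtain ⟨hs, x, hx, hxs⟩ := hC
      have hsC : s ∉ C.1 := Finset.disjoint_right.1 (hmax.1.1 C.1 C.2).2.1 hs
      obtain ⟨μ, hμ⟩ := hmax.critical C.2 hx
      have := GoodSet.edge hxs.symm (by simp [hsC]) (by simp) hμ.good
      rw [Finset.insert_erase hx] at this
      convert this using 1
      ext a
      simp only [g, h, Finset.mem_union, Finset.mem_filter, Finset.mem_insert, Sum.inl.injEq]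
      constructor
      · rintro (h | ⟨_, rfl⟩)
        · exact Or.inr h
        · exact Or.inl rfl
      · rintro (rfl | h)
        · exact Or.inr ⟨hs, rfl⟩
        · exact Or.inl h
    · rw [h, ht2] at hC
      have : g C = C.1 := by simp [g, h]
      rw [this]; exact hC
  have hdisj : ∀ C ∈ (Finset.univ : Finset {C // C ∈ F}), ∀ D ∈ (Finset.univ : Finset {C // C ∈ F}),
      C ≠ D → Disjoint (g C) (g D) := by
    intro C _ D _ hne
    rw [Finset.disjoint_left]
    intro a ha hb
    simp only [g, Finset.mem_union, Finset.mem_filter] at ha hb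
    have hC : a ∈ C.1 → a ∉ S := fun h => Finset.disjoint_left.1 (hmax.1.1 C.1 C.2).2.1 h
    have hD : a ∈ D.1 → a ∉ S := fun h => Finset.disjoint_left.1 (hmax.1.1 D.1 D.2).2.1 h
    have hCD : a ∈ C.1 → a ∉ D.1 := fun h => Finset.disjoint_left.1
      (hmax.1.2 C.1 C.2 D.1 D.2 (fun h => hne (Subtype.ext h))) h
    rcases ha with ha | ha <;> rcases hb with hb | hb
    · exact hCD ha hb
    · exact hC ha hb.1
    · exact hD hb ha.1
    · exact hne (hinj (ha.2.trans hb.2.symm))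
  have := GoodSet.biUnion _ g hgood hdisj
  convert this using 1
  symm
  rw [Finset.eq_univ_iff_forall]
  intro a
  rw [Finset.mem_biUnion]
  rcases hmax.cover a with ha | ⟨C, hC, ha⟩
  · have : Sum.inl a ∈ Finset.univ.image f := by rw [himg]; simpa using ha
    obtain ⟨C, _, hC⟩ := Finset.mem_image.1 this
    exact ⟨C, Finset.mem_univ _, Finset.mem_union_right _ (Finset.mem_filter.2 ⟨ha, hC⟩)⟩
  · exact ⟨⟨C, hC⟩, Finset.mem_univ _, Finset.mem_union_left _ ha⟩

/-- every connected r-regular graph that is not a complete graph of odd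
order has an IPD. -/
theorem regular_connected_not_odd_complete_IPD (G : SimpleGraph V) [DecidableRel G.Adj]
    (r : ℕ) (hreg : G.IsRegularOfDegree r) (hconn : G.Connected)
    (hnc : ¬ (G = ⊤ ∧ Odd (Fintype.card V))) :
    HasIPD G := by
  classical
  have hdeg : ∀ v, (Finset.univ.filter (fun w => G.Adj v w)).card = r := by
    intro v
    rw [← hreg v, ← G.card_neighborFinset_eq_degree v]
    congr 1
    ext w
    simp
  have hcl : ∀ C : Finset V, Odd C.card → ∀ Q ⊆ C,
      (∀ u ∈ Q, ∀ w ∈ Q, u ≠ w → G.Adj u w) → Q.card ≤ r := by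
    intro C hodd Q hQC hQ
    by_contra hlt
    push Not at hlt
    have hclosed : ∀ u ∈ Q, ∀ w, G.Adj u w → w ∈ Q := by
      intro u hu w huw
      have hsub : Q.erase u ⊆ Finset.univ.filter (fun w => G.Adj u w) := by
        intro x hx
        obtain ⟨h1, h2⟩ := Finset.mem_erase.1 hx
        exact Finset.mem_filter.2 ⟨Finset.mem_univ _, hQ u hu x h2 h1.symm⟩
      have heq := Finset.eq_of_subset_of_card_le hsub (by
        rw [hdeg u]
        have := Finset.card_erase_add_one hu
        omega)
      have : w ∈ Q.erase u := by
        rw [heq]; exact Finset.mem_filter.2 ⟨Finset.mem_univ _, huw⟩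
      exact Finset.mem_of_mem_erase this
    obtain ⟨u, hu⟩ : Q.Nonempty := by rw [← Finset.card_pos]; omega
    have hall : ∀ w, w ∈ Q := by
      intro w
      have := (G.reachable_iff_reflTransGen u w).1 (hconn.preconnected u w)
      induction this with
      | refl => exact hu
      | tail _ h ih => exact hclosed _ ih _ h
    apply hnc
    constructor
    · ext x y
      rw [top_adj]
      exact ⟨fun h => h.ne, fun h => hQ x (hall x) y (hall y) h⟩
    · have : C = Finset.univ := Finset.eq_univ_iff_forall.2 fun x => hQC (hall x)
      rwa [this, Finset.card_univ] at hodd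
  have hr : 0 < r := by
    obtain ⟨v⟩ := hconn.nonempty
    have := hcl {v} (by simp) {v} (Finset.Subset.refl _) (by
      intro u hu w hw huw
      rw [Finset.mem_singleton] at hu hw
      exact absurd (hu.trans hw.symm) huw)
    rw [Finset.card_singleton] at this
    omega
  exact (good_univ hr (fun v => by convert hdeg v) hcl).hasIPD
end

section
/- Let G be a connected claw-free graph. Then G has an IPD if and only if G has at least one block that is not a complete graph of odd order. -/
open SimpleGraph

variable {V : Type*} [Fintype V]

/-- The induced subgraph on B is connected (or a single vertex / empty ok? require Connected)
and has no cut vertex. -/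
def NoCutVertexSet (G : SimpleGraph V) (B : Set V) : Prop :=
  (G.induce B).Connected ∧ ∀ v ∈ B, (G.induce (B \ {v})).Preconnected

/-- B is a block (maximal 2-connected piece, in the sense of no cut vertex) of the subgraph
of G induced on H. -/
def IsBlockWithin (G : SimpleGraph V) (H B : Set V) : Prop :=
  B ⊆ H ∧ NoCutVertexSet G B ∧
    ∀ B', B ⊆ B' → B' ⊆ H → NoCutVertexSet G B' → B' = B

/-- B is a block of G. -/
def IsBlock (G : SimpleGraph V) (B : Set V) : Prop :=
  IsBlockWithin G Set.univ B

/-- The set B induces a complete graph of odd order. -/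
def IsOddComplete (G : SimpleGraph V) (B : Set V) : Prop :=
  Odd B.ncard ∧ ∀ u ∈ B, ∀ v ∈ B, u ≠ v → G.Adj u v

/-- v is a cut vertex of the subgraph of G induced on H. -/
def IsCutVertexWithin (G : SimpleGraph V) (H : Set V) (v : V) : Prop :=
  v ∈ H ∧ ∃ x y : V, ∃ hx : x ∈ H \ {v}, ∃ hy : y ∈ H \ {v},
    (G.induce H).Reachable ⟨x, hx.1⟩ ⟨y, hy.1⟩ ∧
      ¬ (G.induce (H \ {v})).Reachable ⟨x, hx⟩ ⟨y, hy⟩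

/-- B is a leaf block of the subgraph of G induced on H: a block containing at most one
cut vertex. -/
def IsLeafBlockWithin (G : SimpleGraph V) (H B : Set V) : Prop :=
  IsBlockWithin G H B ∧ {v ∈ B | IsCutVertexWithin G H v}.Subsingleton

/-- C is a connected component of G - S. -/
def IsComponentAvoiding (G : SimpleGraph V) (S C : Set V) : Prop :=
  C.Nonempty ∧ Disjoint C S ∧ (G.induce C).Connected ∧
    ∀ x ∈ C, ∀ y, y ∉ S → G.Adj x y → y ∈ C

/-- G is claw-free. -/
def ClawFree (G : SimpleGraph V) : Prop :=
  IsEmpty (completeBipartiteGraph (Fin 1) (Fin 3) ↪g G)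


/-! ### Reachability inside a set -/

/-- `u` and `v` are joined by a walk of `G` inside `T`. -/
def RS (G : SimpleGraph V) (T : Set V) (u v : V) : Prop :=
  ∃ p : G.Walk u v, ∀ z ∈ p.support, z ∈ T

set_option linter.unusedSectionVars false

section Aux

variable {G : SimpleGraph V}

theorem RS.refl {T : Set V} {u : V} (h : u ∈ T) : RS G T u u :=
  ⟨Walk.nil, by simpa using h⟩

theorem RS.trans {T : Set V} {u v w : V} (h : RS G T u v) (h' : RS G T v w) : RS G T u w := by
  obtain ⟨p, hp⟩ := h
  obtain ⟨q, hq⟩ := h'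
  refine ⟨p.append q, fun z hz => ?_⟩
  rcases (Walk.mem_support_append_iff p q).1 hz with h | h
  · exact hp z h
  · exact hq z h

theorem RS.symm {T : Set V} {u v : V} (h : RS G T u v) : RS G T v u := by
  obtain ⟨p, hp⟩ := h
  exact ⟨p.reverse, fun z hz => hp z (by simpa using hz)⟩

theorem RS.mono {T T' : Set V} {u v : V} (h : RS G T u v) (hT : T ⊆ T') : RS G T' u v := by
  obtain ⟨p, hp⟩ := h
  exact ⟨p, fun z hz => hT (hp z hz)⟩

theorem RS.edge {T : Set V} {u v : V} (hu : u ∈ T) (hv : v ∈ T) (h : G.Adj u v) : RS G T u v :=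
  ⟨Walk.cons h Walk.nil, by simp [hu, hv]⟩

theorem RS.left {T : Set V} {u v : V} (h : RS G T u v) : u ∈ T := by
  obtain ⟨p, hp⟩ := h
  exact hp u p.start_mem_support

theorem RS.right {T : Set V} {u v : V} (h : RS G T u v) : v ∈ T := h.symm.left

/-- first step of a walk -/
theorem RS.step {T : Set V} {u v : V} (h : RS G T u v) (hne : u ≠ v) :
    ∃ w ∈ T, G.Adj u w := by
  obtain ⟨p, hp⟩ := h
  cases p with
  | nil => exact absurd rfl hne
  | cons hadj q => exact ⟨_, hp _ (by simp), hadj⟩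

theorem reachable_iff_RS {T : Set V} {u v : V} (hu : u ∈ T) (hv : v ∈ T) :
    (G.induce T).Reachable ⟨u, hu⟩ ⟨v, hv⟩ ↔ RS G T u v := by
  constructor
  · rintro ⟨p⟩
    refine ⟨p.map (Embedding.induce T).toHom, fun z hz => ?_⟩
    erw [Walk.support_map, List.mem_map] at hz
    obtain ⟨a, _, rfl⟩ := hz
    exact a.2
  · rintro ⟨p, hp⟩
    exact ⟨p.induce T hp⟩

theorem preconnected_iff_RS {T : Set V} :
    (G.induce T).Preconnected ↔ ∀ u ∈ T, ∀ v ∈ T, RS G T u v := by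
  constructor
  · intro h u hu v hv
    exact (reachable_iff_RS hu hv).1 (h _ _)
  · rintro h ⟨u, hu⟩ ⟨v, hv⟩
    exact (reachable_iff_RS hu hv).2 (h u hu v hv)

theorem ncv_iff {T : Set V} :
    NoCutVertexSet G T ↔ T.Nonempty ∧ (∀ u ∈ T, ∀ v ∈ T, RS G T u v) ∧
      ∀ x ∈ T, ∀ u ∈ T \ {x}, ∀ v ∈ T \ {x}, RS G (T \ {x}) u v := by
  unfold NoCutVertexSet
  simp only [connected_iff, preconnected_iff_RS, Set.nonempty_coe_sort]
  tauto

/-- A vertex whose neighbours form a clique can be bypassed. -/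
theorem RS.bypass {W : Set V} {x : V}
    (hcl : ∀ a ∈ W, ∀ b ∈ W, G.Adj x a → G.Adj x b → a ≠ b → G.Adj a b)
    {u v : V} (h : RS G W u v) (hu : u ≠ x) (hv : v ≠ x) : RS G (W \ {x}) u v := by
  obtain ⟨p, hp⟩ := h
  have key : (u ≠ x → RS G (W \ {x}) u v) ∧
      (u = x → ∀ n ∈ W, G.Adj x n → RS G (W \ {x}) n v) := by
    clear hu
    induction p with
    | nil =>
      refine ⟨fun h => RS.refl ⟨hp _ (by simp), h⟩, fun h => absurd h hv⟩
    | @cons u b c hadj q ih =>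
      have ih' := ih hv (fun z hz => hp z (by simp [hz]))
      have huW : u ∈ W := hp _ (by simp)
      have hbW : b ∈ W := hp _ (by simp)
      constructor
      · intro hux
        by_cases hbx : b = x
        · exact ih'.2 hbx u huW (hbx ▸ hadj.symm)
        · exact RS.trans (RS.edge (T := W \ {x}) ⟨huW, hux⟩ ⟨hbW, hbx⟩ hadj) (ih'.1 hbx)
      · rintro rfl n hn hxn
        have hbx : b ≠ u := hadj.ne'
        have h1 := ih'.1 hbx
        by_cases hnb : n = b
        · exact hnb ▸ h1
        · exact RS.trans (RS.edge (T := W \ {u}) ⟨hn, hxn.ne'⟩ ⟨hbW, hbx⟩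
            (hcl n hn b hbW hxn hadj hnb)) h1
  exact key.1 hu

theorem NCV.remove {T : Set V} (hT : NoCutVertexSet G T) {x : V}
    (hne : (T \ {x}).Nonempty)
    (hcl : ∀ a ∈ T, ∀ b ∈ T, G.Adj x a → G.Adj x b → a ≠ b → G.Adj a b) :
    NoCutVertexSet G (T \ {x}) := by
  rw [ncv_iff] at hT ⊢
  obtain ⟨-, h1, h2⟩ := hT
  refine ⟨hne, fun u hu v hv => (h1 u hu.1 v hv.1).bypass hcl hu.2 hv.2, ?_⟩
  intro w hw u hu v hv
  have := (h2 w hw.1 u ⟨hu.1.1, hu.2⟩ v ⟨hv.1.1, hv.2⟩).bypass (x := x)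
    (fun a ha b hb => hcl a ha.1 b hb.1) hu.1.2 hv.1.2
  exact this.mono (fun z hz => ⟨⟨hz.1.1, hz.2⟩, hz.1.2⟩)

theorem walk_reach_end {a c : V} (p : G.Walk a c) : ∀ z : V, z ∈ p.support →
    RS G {t | t ∈ p.support} z c := by
  induction p with
  | nil =>
    intro z hz
    simp only [Walk.support_nil, List.mem_singleton] at hz
    subst hz
    exact RS.refl (by simp)
  | @cons u b c hadj q ih =>
    intro z hz
    rw [Walk.support_cons, List.mem_cons] at hz
    have hsub : ({t | t ∈ q.support} : Set V) ⊆ {t | t ∈ (Walk.cons hadj q).support} := by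
      intro t ht
      have ht' : t ∈ q.support := ht
      show t ∈ (Walk.cons hadj q).support
      simp [ht']
    have hb := (ih b q.start_mem_support).mono hsub
    rcases hz with rfl | hz
    · exact (RS.edge (by simp) (by simp) hadj).trans hb
    · exact (ih z hz).mono hsub

theorem path_reach {a c : V} (p : G.Walk a c) (hp : p.IsPath) {v z : V} (hv : v ∈ p.support)
    (hz : z ∈ p.support) (hzv : z ≠ v) :
    RS G ({t | t ∈ p.support} \ {v}) z a ∨ RS G ({t | t ∈ p.support} \ {v}) z c := by
  induction p with
  | nil =>
    simp only [Walk.support_nil, List.mem_singleton] at hz hv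
    exact absurd (hz.trans hv.symm) hzv
  | @cons u b c hadj q ih =>
    rw [Walk.cons_isPath_iff] at hp
    rw [Walk.support_cons, List.mem_cons] at hz hv
    have hsub : ∀ t, t ∈ q.support → t ∈ (Walk.cons hadj q).support := by
      intro t ht; simp [ht]
    by_cases hvu : v = u
    · have hz' : z ∈ q.support := by
        rcases hz with h | h
        · exact absurd (h.trans hvu.symm) hzv
        · exact h
      right
      refine (walk_reach_end q z hz').mono (fun t ht => ⟨hsub t ht, ?_⟩)
      rintro rfl
      exact hp.2 (hvu ▸ ht)
    · have hv' : v ∈ q.support := by tauto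
      by_cases hzu : z = u
      · left
        subst hzu
        exact RS.refl ⟨by simp, hzv⟩
      · have hz' : z ∈ q.support := by tauto
        have hmono : ({t | t ∈ q.support} \ {v} : Set V) ⊆
            {t | t ∈ (Walk.cons hadj q).support} \ {v} := fun t ht => ⟨hsub t ht.1, ht.2⟩
        rcases ih hp.1 hv' hz' with h | h
        · left
          have h' := h.mono hmono
          exact h'.trans (RS.edge h'.right ⟨by simp, fun h => hvu h.symm⟩ hadj.symm)
        · right
          exact h.mono hmono

/-- A cycle spans a vertex set without cut vertex. -/
theorem cycle_ncv {U : Set V} {a c x : V} (h : RS G U a c) (hxU : x ∉ U)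
    (hxa : G.Adj x a) (hxc : G.Adj x c) :
    ∃ T : Set V, T ⊆ insert x U ∧ x ∈ T ∧ a ∈ T ∧ c ∈ T ∧ NoCutVertexSet G T := by
  classical
  obtain ⟨p0, hp0⟩ := h
  obtain ⟨p, hpath, hpU⟩ : ∃ p : G.Walk a c, p.IsPath ∧ ∀ z ∈ p.support, z ∈ U :=
    ⟨p0.bypass, p0.bypass_isPath, fun z hz => hp0 z (p0.support_bypass_subset_support hz)⟩
  have hxp : x ∉ p.support := fun h => hxU (hpU x h)
  set P : Set V := {t | t ∈ p.support} with hP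
  have haP : a ∈ P := p.start_mem_support
  have hcP : c ∈ P := p.end_mem_support
  have key : ∀ S : Set V, P ⊆ S → ∀ u ∈ P, ∀ v ∈ P, RS G S u v := by
    intro S hS u hu v hv
    exact ((walk_reach_end p u hu).trans (walk_reach_end p v hv).symm).mono hS
  refine ⟨insert x P, ?_, by simp, by simp [haP], by simp [hcP], ?_⟩
  · rintro z (rfl | hz)
    · simp
    · exact Or.inr (hpU z hz)
  · rw [ncv_iff]
    refine ⟨⟨x, by simp⟩, ?_, ?_⟩
    · have : ∀ u ∈ insert x P, RS G (insert x P) u a := by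
        rintro u (rfl | hu)
        · exact RS.edge (by simp) (by simp [haP]) hxa
        · exact key _ (Set.subset_insert _ _) u hu a haP
      intro u hu v hv
      exact (this u hu).trans (this v hv).symm
    · intro v hv
      by_cases hvx : v = x
      · subst hvx
        rintro u ⟨hu, hux⟩ w ⟨hw, hwx⟩
        refine key _ ?_ u (hu.resolve_left hux) w (hw.resolve_left hwx)
        intro t ht
        refine ⟨Or.inr ht, ?_⟩
        rintro rfl
        exact hxp ht
      · have hvP : v ∈ P := hv.resolve_left hvx
        have hxm : x ∈ insert x P \ {v} := ⟨by simp, fun h => hvx h.symm⟩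
        have : ∀ u ∈ insert x P \ {v}, RS G (insert x P \ {v}) u x := by
          rintro u ⟨hu, huv⟩
          rcases hu with rfl | hu
          · exact RS.refl hxm
          · have hm : P \ {v} ⊆ insert x P \ {v} := fun t ht => ⟨Or.inr ht.1, ht.2⟩
            rcases path_reach p hpath hvP hu huv with h | h
            · exact (h.mono hm).trans (RS.edge (h.mono hm).right hxm hxa.symm)
            · exact (h.mono hm).trans (RS.edge (h.mono hm).right hxm hxc.symm)
        intro u hu w hw
        exact (this u hu).trans (this w hw).symm

end Aux

/-! ### Decompositions into edges and induced paths on three vertices -/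

/-- `S` has a perfect matching. -/
inductive PMat (G : SimpleGraph V) : Set V → Prop
  | nil : PMat G ∅
  | pair (S : Set V) (a b : V) : a ∈ S → b ∈ S → G.Adj a b → PMat G (S \ {a, b}) → PMat G S

/-- `S` can be partitioned into edges and induced paths on three vertices. -/
inductive PDec (G : SimpleGraph V) : Set V → Prop
  | nil : PDec G ∅
  | pair (S : Set V) (a b : V) : a ∈ S → b ∈ S → G.Adj a b → PDec G (S \ {a, b}) → PDec G S
  | tri (S : Set V) (a b c : V) : a ∈ S → b ∈ S → c ∈ S → G.Adj a b → G.Adj b c → a ≠ c →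
      ¬ G.Adj a c → PDec G (S \ {a, b, c}) → PDec G S

/-- `S` arises from `S \ {x, y}` by adding two adjacent twins attached to one vertex
or one block. -/
structure TwinExt (G : SimpleGraph V) (S : Set V) (x y : V) : Prop where
  hx : x ∈ S
  hy : y ∈ S
  adj : G.Adj x y
  nb : ∀ n ∈ S \ {x, y}, (G.Adj x n ↔ G.Adj y n)
  ne : ∃ n ∈ S \ {x, y}, G.Adj x n
  clique : ∀ a ∈ S \ {x, y}, ∀ b ∈ S \ {x, y}, G.Adj x a → G.Adj x b → a ≠ b → G.Adj a b
  closed : ∀ a ∈ S \ {x, y}, ∀ b ∈ S \ {x, y}, G.Adj x a → G.Adj x b → a ≠ b →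
    ∀ w ∈ S \ {x, y}, G.Adj w a → G.Adj w b → G.Adj x w

/-- Graphs all of whose blocks are odd complete, built up pair by pair. -/
inductive OddBuilt (G : SimpleGraph V) : Set V → Prop
  | single (v : V) : OddBuilt G {v}
  | step (S : Set V) (x y : V) : TwinExt G S x y → OddBuilt G (S \ {x, y}) → OddBuilt G S

/-- Matching properties of `OddBuilt` sets. -/
structure MatInv (G : SimpleGraph V) (S : Set V) : Prop where
  i1 : ∀ v ∈ S, PMat G (S \ {v})
  i2 : ∀ u ∈ S, ∀ v ∈ S, u ≠ v → ¬ G.Adj u v → ∃ w ∈ S, G.Adj w u ∧ w ≠ v ∧ PMat G (S \ {u, v, w})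
  i3 : ∀ u ∈ S, ∀ v ∈ S, ∀ w ∈ S, G.Adj u v → G.Adj u w → G.Adj v w → PMat G (S \ {u, v, w})
  i5 : ∀ u ∈ S, ∀ v ∈ S, G.Adj u v → ∃ w ∈ S, G.Adj u w ∧ G.Adj v w

section Aux2

variable {G : SimpleGraph V}

theorem PMat.dec {S : Set V} (h : PMat G S) : PDec G S := by
  induction h with
  | nil => exact PDec.nil
  | pair S a b ha hb hab _ ih => exact PDec.pair S a b ha hb hab ih

theorem PMat.cast {S T : Set V} (h : PMat G S) (e : S = T) : PMat G T := e ▸ h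

theorem PDec.cast {S T : Set V} (h : PDec G S) (e : S = T) : PDec G T := e ▸ h

theorem PDec.part {S : Set V} (h : PDec G S) : ∀ x ∈ S,
    (∃ a ∈ S, G.Adj x a ∧ PDec G (S \ {x, a})) ∨
    (∃ a ∈ S, ∃ b ∈ S, G.Adj x a ∧ G.Adj a b ∧ x ≠ b ∧ ¬ G.Adj x b ∧ PDec G (S \ {x, a, b})) ∨
    (∃ a ∈ S, ∃ b ∈ S, G.Adj x a ∧ G.Adj x b ∧ a ≠ b ∧ ¬ G.Adj a b ∧ PDec G (S \ {x, a, b})) := by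
  induction h with
  | nil => intro x hx; exact absurd hx (by simp)
  | pair S a b ha hb hab hd ih =>
    intro x hx
    by_cases hxa : x = a
    · subst hxa
      exact Or.inl ⟨b, hb, hab, hd⟩
    by_cases hxb : x = b
    · subst hxb
      exact Or.inl ⟨a, ha, hab.symm, hd.cast (by rw [Set.pair_comm])⟩
    rcases ih x ⟨hx, by simp [hxa, hxb]⟩ with ⟨c, hc, h1, h2⟩ | ⟨c, hc, d, hd', h1, h2, h3, h4, h5⟩
      | ⟨c, hc, d, hd', h1, h2, h3, h4, h5⟩
    · refine Or.inl ⟨c, hc.1, h1, PDec.pair _ a b ?_ ?_ hab (h2.cast ?_)⟩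
      all_goals grind
    · refine Or.inr (Or.inl ⟨c, hc.1, d, hd'.1, h1, h2, h3, h4,
        PDec.pair _ a b ?_ ?_ hab (h5.cast ?_)⟩)
      all_goals grind
    · refine Or.inr (Or.inr ⟨c, hc.1, d, hd'.1, h1, h2, h3, h4,
        PDec.pair _ a b ?_ ?_ hab (h5.cast ?_)⟩)
      all_goals grind
  | tri S a b c ha hb hc hab hbc hne hac hd ih =>
    intro x hx
    by_cases hxa : x = a
    · subst hxa
      exact Or.inr (Or.inl ⟨b, hb, c, hc, hab, hbc, hne, hac, hd⟩)
    by_cases hxb : x = b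
    · subst hxb
      exact Or.inr (Or.inr ⟨a, ha, c, hc, hab.symm, hbc, hne, hac, hd.cast (by grind)⟩)
    by_cases hxc : x = c
    · subst hxc
      exact Or.inr (Or.inl ⟨b, hb, a, ha, hbc.symm, hab.symm, hne.symm, fun h => hac h.symm,
        hd.cast (by grind)⟩)
    rcases ih x ⟨hx, by simp [hxa, hxb, hxc]⟩ with ⟨p, hp, h1, h2⟩ |
      ⟨p, hp, q, hq, h1, h2, h3, h4, h5⟩ | ⟨p, hp, q, hq, h1, h2, h3, h4, h5⟩
    · refine Or.inl ⟨p, hp.1, h1, PDec.tri _ a b c ?_ ?_ ?_ hab hbc hne hac (h2.cast ?_)⟩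
      all_goals grind
    · refine Or.inr (Or.inl ⟨p, hp.1, q, hq.1, h1, h2, h3, h4,
        PDec.tri _ a b c ?_ ?_ ?_ hab hbc hne hac (h5.cast ?_)⟩)
      all_goals grind
    · refine Or.inr (Or.inr ⟨p, hp.1, q, hq.1, h1, h2, h3, h4,
        PDec.tri _ a b c ?_ ?_ ?_ hab hbc hne hac (h5.cast ?_)⟩)
      all_goals grind

theorem TwinExt.dec {S : Set V} {x y : V} (e : TwinExt G S x y) (h : PDec G S) : PDec G (S \ {x, y}) := by
  have hxy := e.adj
  have hne := hxy.ne
  have memN : ∀ a ∈ S, G.Adj x a → a ≠ y → a ∈ S \ {x, y} := by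
    intro a ha h1 h2
    have := h1.ne
    grind
  have memN' : ∀ a ∈ S, G.Adj y a → a ≠ x → a ∈ S \ {x, y} ∧ G.Adj x a := by
    intro a ha h1 h2
    have := h1.ne
    have h3 : a ∈ S \ {x, y} := by grind
    exact ⟨h3, (e.nb a h3).2 h1⟩
  rcases h.part x e.hx with ⟨a, ha, h1, h2⟩ | ⟨a, ha, b, hb, h1, h2, h3, h4, h5⟩
      | ⟨a, ha, b, hb, h1, h2, h3, h4, h5⟩
  · by_cases hay : a = y
    · subst hay; exact h2
    have haN := memN a ha h1 hay
    have hyS : y ∈ S \ {x, a} := ⟨e.hy, by grind⟩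
    rcases h2.part y hyS with ⟨c, hc, g1, g2⟩ | ⟨c, hc, d, hd, g1, g2, g3, g4, g5⟩
      | ⟨c, hc, d, hd, g1, g2, g3, g4, g5⟩
    · obtain ⟨hcN, hxc⟩ := memN' c hc.1 g1 (by grind)
      refine PDec.pair _ a c haN hcN (e.clique a haN c hcN h1 hxc (by grind)) (g2.cast ?_)
      grind
    · obtain ⟨hcN, hxc⟩ := memN' c hc.1 g1 (by grind)
      have hdN : d ∈ S \ {x, y} := by grind
      have hac : a ≠ c := by grind
      refine PDec.tri _ a c d haN hcN hdN (e.clique a haN c hcN h1 hxc hac) g2 (by grind) ?_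
        (g5.cast ?_)
      · intro had
        exact g4 ((e.nb d hdN).1 (e.closed a haN c hcN h1 hxc hac d hdN had.symm g2.symm))
      · grind
    · obtain ⟨hcN, hxc⟩ := memN' c hc.1 g1 (by grind)
      obtain ⟨hdN, hxd⟩ := memN' d hd.1 g2 (by grind)
      exact absurd (e.clique c hcN d hdN hxc hxd g3) g4
  · by_cases hay : a = y
    · subst hay
      have hbN : b ∈ S \ {x, a} := by
        have := h2.ne
        grind
      exact absurd ((e.nb b hbN).2 h2) h4
    have haN := memN a ha h1 hay
    have hby : b ≠ y := by rintro rfl; exact h4 hxy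
    have hbN : b ∈ S \ {x, y} := by grind
    have hyS : y ∈ S \ {x, a, b} := ⟨e.hy, by grind⟩
    rcases h5.part y hyS with ⟨c, hc, g1, g2⟩ | ⟨c, hc, d, hd, g1, g2, g3, g4, g5⟩
      | ⟨c, hc, d, hd, g1, g2, g3, g4, g5⟩
    · obtain ⟨hcN, hxc⟩ := memN' c hc.1 g1 (by grind)
      have hac : a ≠ c := by grind
      refine PDec.tri _ c a b hcN haN hbN (e.clique c hcN a haN hxc h1 hac.symm) h2 (by grind) ?_
        (g2.cast ?_)
      · intro hcb
        exact h4 (e.closed a haN c hcN h1 hxc hac b hbN h2.symm hcb.symm)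
      · grind
    · obtain ⟨hcN, hxc⟩ := memN' c hc.1 g1 (by grind)
      have hdN : d ∈ S \ {x, y} := by grind
      refine PDec.pair _ a b haN hbN h2 (PDec.pair _ c d ?_ ?_ g2 (g5.cast ?_))
      all_goals grind
    · obtain ⟨hcN, hxc⟩ := memN' c hc.1 g1 (by grind)
      obtain ⟨hdN, hxd⟩ := memN' d hd.1 g2 (by grind)
      exact absurd (e.clique c hcN d hdN hxc hxd g3) g4
  · by_cases hay : a = y
    · subst hay
      have hbN := memN b hb h2 h3.symm
      exact absurd ((e.nb b hbN).1 h2) h4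
    by_cases hby : b = y
    · subst hby
      have haN := memN a ha h1 h3
      exact absurd ((e.nb a haN).1 h1).symm h4
    exact absurd (e.clique a (memN a ha h1 hay) b (memN b hb h2 hby) h1 h2 h3) h4

theorem OddBuilt.not_dec {S : Set V} (h : OddBuilt G S) : ¬ PDec G S := by
  induction h with
  | single v =>
    intro h
    rcases h.part v rfl with ⟨a, ha, h1, -⟩ | ⟨a, ha, -, -, h1, -⟩ | ⟨a, ha, -, -, h1, -⟩ <;>
    · rw [Set.mem_singleton_iff] at ha
      subst ha
      exact h1.ne rfl
  | step S x y e _ ih => exact fun h => ih (e.dec h)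

theorem MatInv.single (v : V) : MatInv G {v} where
  i1 := by
    rintro u rfl
    exact PMat.nil.cast (by simp)
  i2 := by
    rintro u rfl w rfl h
    exact absurd rfl h
  i3 := by
    rintro u rfl w rfl z rfl h
    exact absurd h (by simp)
  i5 := by
    rintro u rfl w rfl h
    exact absurd h (by simp)

theorem TwinExt.symm {S : Set V} {x y : V} (e : TwinExt G S x y) : TwinExt G S y x := by
  have e' : S \ {y, x} = S \ {x, y} := by rw [Set.pair_comm]
  refine ⟨e.hy, e.hx, e.adj.symm, ?_, ?_, ?_, ?_⟩ <;> rw [e']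
  · intro n hn; exact (e.nb n hn).symm
  · obtain ⟨n, hn, h⟩ := e.ne
    exact ⟨n, hn, (e.nb n hn).1 h⟩
  · intro a ha b hb h1 h2
    exact e.clique a ha b hb ((e.nb a ha).2 h1) ((e.nb b hb).2 h2)
  · intro a ha b hb h1 h2 h3 w hw h4 h5
    exact (e.nb w hw).1 (e.closed a ha b hb ((e.nb a ha).2 h1) ((e.nb b hb).2 h2) h3 w hw h4 h5)

/-- part of `MatInv.i2`, one vertex new, removed second -/
theorem TwinExt.i2_aux {S : Set V} {x y : V} (e : TwinExt G S x y) (I : MatInv G (S \ {x, y})) :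
    ∀ u ∈ S \ {x, y}, ¬ G.Adj u x → ∃ w ∈ S, G.Adj w u ∧ w ≠ x ∧ PMat G (S \ {u, x, w}) := by
  intro u hu hux
  have hxy := e.adj.ne
  have fin : ∀ n ∈ S \ {x, y}, G.Adj x n → ∀ w ∈ S \ {x, y}, n ≠ u → w ≠ n →
      PMat G ((S \ {x, y}) \ {u, n, w}) → PMat G (S \ {u, x, w}) := by
    intro n hn hxn w hw hnu hwn hm
    have hy := e.hy
    refine PMat.pair _ n y ?_ ?_ ((e.nb n hn).1 hxn).symm (hm.cast ?_)
    all_goals grind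
  by_cases hall : ∀ n ∈ S \ {x, y}, G.Adj x n → G.Adj u n
  · obtain ⟨n, hn, hxn⟩ := e.ne
    obtain ⟨w, hw, h1, h2⟩ := I.i5 u hu n hn (hall n hn hxn)
    exact ⟨w, hw.1, h1.symm, by grind, fin n hn hxn w hw (hall n hn hxn).ne' h2.ne'
      (I.i3 u hu n hn w hw (hall n hn hxn) h1 h2)⟩
  · push Not at hall
    obtain ⟨n, hn, hxn, hun⟩ := hall
    have hne : u ≠ n := by rintro rfl; exact hux hxn.symm
    obtain ⟨w, hw, h1, h2, h3⟩ := I.i2 u hu n hn hne hun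
    exact ⟨w, hw.1, h1, by grind, fin n hn hxn w hw hne.symm h2 h3⟩

/-- part of `MatInv.i3` -/
theorem TwinExt.i3_aux {S : Set V} {x y : V} (e : TwinExt G S x y) (I : MatInv G (S \ {x, y})) :
    ∀ u ∈ S, ∀ v ∈ S, G.Adj u x → G.Adj v x → G.Adj u v → PMat G (S \ {x, u, v}) := by
  intro u hu v hv hux hvx huv
  have hxy := e.adj.ne
  have h1 := hux.ne
  have h2 := hvx.ne
  have h3 := huv.ne
  by_cases huy : u = y
  · exact (I.i1 v (by grind)).cast (by grind)
  by_cases hvy : v = y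
  · exact (I.i1 u (by grind)).cast (by grind)
  have huN : u ∈ S \ {x, y} := by grind
  have hvN : v ∈ S \ {x, y} := by grind
  obtain ⟨w, hw, g1, g2⟩ := I.i5 u huN v hvN huv
  have hxw := e.closed u huN v hvN hux.symm hvx.symm h3 w hw g1.symm g2.symm
  have := g1.ne
  have := g2.ne
  have := e.hy
  refine PMat.pair _ w y ?_ ?_ ((e.nb w hw).1 hxw).symm
    ((I.i3 u huN v hvN w hw huv g1 g2).cast ?_)
  all_goals grind

theorem TwinExt.inv {S : Set V} {x y : V} (e : TwinExt G S x y) (I : MatInv G (S \ {x, y})) : MatInv G S := by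
  have hxy := e.adj.ne
  have hx := e.hx
  have hy := e.hy
  have ec : S \ {y, x} = S \ {x, y} := by rw [Set.pair_comm]
  have I' : MatInv G (S \ {y, x}) := ec ▸ I
  refine ⟨?_, ?_, ?_, ?_⟩
  · have aux : ∀ {x y : V}, TwinExt G S x y → MatInv G (S \ {x, y}) → PMat G (S \ {x}) := by
      intro x y e I
      obtain ⟨n, hn, h⟩ := e.ne
      have := e.adj.ne
      have := e.hy
      exact PMat.pair _ n y (by grind) (by grind) ((e.nb n hn).1 h).symm
        ((I.i1 n hn).cast (by grind))
    intro v hv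
    by_cases hvx : v = x
    · subst hvx; exact aux e I
    by_cases hvy : v = y
    · subst hvy; exact aux e.symm I'
    exact PMat.pair _ x y (by grind) (by grind) e.adj ((I.i1 v (by grind)).cast (by grind))
  · intro u hu v hv huv hadj
    by_cases hvx : v = x
    · subst hvx
      refine e.i2_aux I u ?_ hadj
      have : u ≠ y := by rintro rfl; exact hadj e.adj.symm
      grind
    by_cases hvy : v = y
    · subst hvy
      refine e.symm.i2_aux I' u ?_ hadj
      have : u ≠ x := by rintro rfl; exact hadj e.adj
      grind
    have hvN : v ∈ S \ {x, y} := by grind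
    by_cases hux : u = x
    · subst hux
      exact ⟨y, hy, e.adj.symm, by grind, (I.i1 v hvN).cast (by grind)⟩
    by_cases huy : u = y
    · subst huy
      exact ⟨x, hx, e.adj, by grind, (I.i1 v hvN).cast (by grind)⟩
    obtain ⟨w, hw, h1, h2, h3⟩ := I.i2 u (by grind) v hvN huv hadj
    exact ⟨w, hw.1, h1, h2, PMat.pair _ x y (by grind) (by grind) e.adj (h3.cast (by grind))⟩
  · intro u hu v hv w hw h1 h2 h3
    by_cases hux : u = x
    · subst hux; exact e.i3_aux I v hv w hw h1.symm h2.symm h3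
    by_cases huy : u = y
    · subst huy; exact e.symm.i3_aux I' v hv w hw h1.symm h2.symm h3
    by_cases hvx : v = x
    · subst hvx; exact (e.i3_aux I u hu w hw h1 h3.symm h2).cast (by grind)
    by_cases hvy : v = y
    · subst hvy; exact (e.symm.i3_aux I' u hu w hw h1 h3.symm h2).cast (by grind)
    by_cases hwx : w = x
    · subst hwx; exact (e.i3_aux I u hu v hv h2 h3 h1).cast (by grind)
    by_cases hwy : w = y
    · subst hwy; exact (e.symm.i3_aux I' u hu v hv h2 h3 h1).cast (by grind)
    exact PMat.pair _ x y (by grind) (by grind) e.adj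
      ((I.i3 u (by grind) v (by grind) w (by grind) h1 h2 h3).cast (by grind))
  · have aux : ∀ {x y : V}, TwinExt G S x y → ∀ v ∈ S, G.Adj x v → ∃ w ∈ S, G.Adj x w ∧ G.Adj v w := by
      intro x y e v hv hxv
      by_cases hvy : v = y
      · subst hvy
        obtain ⟨n, hn, h⟩ := e.ne
        exact ⟨n, hn.1, h, (e.nb n hn).1 h⟩
      · have := hxv.ne
        exact ⟨y, e.hy, e.adj, ((e.nb v (by grind)).1 hxv).symm⟩
    intro u hu v hv huv
    by_cases hux : u = x
    · subst hux; exact aux e v hv huv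
    by_cases huy : u = y
    · subst huy; exact aux e.symm v hv huv
    by_cases hvx : v = x
    · subst hvx
      obtain ⟨w, hw, h1, h2⟩ := aux e u hu huv.symm
      exact ⟨w, hw, h2, h1⟩
    by_cases hvy : v = y
    · subst hvy
      obtain ⟨w, hw, h1, h2⟩ := aux e.symm u hu huv.symm
      exact ⟨w, hw, h2, h1⟩
    obtain ⟨w, hw, h1, h2⟩ := I.i5 u (by grind) v (by grind) huv
    exact ⟨w, hw.1, h1, h2⟩

theorem OddBuilt.inv {S : Set V} (h : OddBuilt G S) : MatInv G S := by
  induction h with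
  | single v => exact MatInv.single v
  | step S x y e _ ih => exact e.inv ih

/-- The inductive step for the dichotomy. -/
theorem ext_or_dec {S : Set V} {x y : V} (hx : x ∈ S) (hy : y ∈ S) (hxy : G.Adj x y)
    (hne : ∃ n ∈ S \ {x, y}, G.Adj x n ∨ G.Adj y n) (I : MatInv G (S \ {x, y}))
    (hD : ¬ PDec G S) : TwinExt G S x y := by
  have hxy' := hxy.ne
  have nb : ∀ n ∈ S \ {x, y}, (G.Adj x n ↔ G.Adj y n) := by
    intro n hn
    by_contra hcon
    apply hD
    by_cases h1 : G.Adj x n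
    · have h2 : ¬ G.Adj y n := by tauto
      exact PDec.tri _ y x n hy hx hn.1 hxy.symm h1 (by grind) h2 ((I.i1 n hn).dec.cast (by grind))
    · have h2 : G.Adj y n := by tauto
      exact PDec.tri _ x y n hx hy hn.1 hxy h2 (by grind) h1 ((I.i1 n hn).dec.cast (by grind))
  -- the construction using a path `w u x` and an edge `v y`
  have con : ∀ u ∈ S \ {x, y}, ∀ v ∈ S \ {x, y}, ∀ w ∈ S \ {x, y}, G.Adj x u → G.Adj x v →
      ¬ G.Adj x w → G.Adj w u → u ≠ v → w ≠ v → ¬ PMat G ((S \ {x, y}) \ {u, v, w}) := by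
    intro u hu v hv w hw h1 h2 h3 h4 h5 h6 hm
    apply hD
    have := h4.ne
    refine PDec.tri _ w u x hw.1 hu.1 hx h4 h1.symm (by grind) (fun h => h3 h.symm) ?_
    exact PDec.pair _ v y (by grind) (by grind) ((nb v hv).1 h2).symm (hm.dec.cast (by grind))
  have clique : ∀ a ∈ S \ {x, y}, ∀ b ∈ S \ {x, y}, G.Adj x a → G.Adj x b → a ≠ b →
      G.Adj a b := by
    intro u hu v hv h1 h2 h3
    by_contra h4
    obtain ⟨w, hw, g1, g2, g3⟩ := I.i2 u hu v hv h3 h4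
    have := g1.ne
    by_cases hxw : G.Adj x w
    · apply hD
      refine PDec.tri _ u x v hu.1 hx hv.1 h1.symm h2 h3 h4 ?_
      exact PDec.pair _ w y (by grind) (by grind) ((nb w hw).1 hxw).symm
        (g3.dec.cast (by clear con nb hD; grind))
    · exact con u hu v hv w hw h1 h2 hxw g1 h3 g2 g3
  refine ⟨hx, hy, hxy, nb, ?_, clique, ?_⟩
  · obtain ⟨n, hn, h⟩ := hne
    exact ⟨n, hn, by have := nb n hn; tauto⟩
  · intro u hu v hv h1 h2 h3 w hw h4 h5
    by_contra h6
    exact con u hu v hv w hw h1 h2 h6 h4 h3 h5.ne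
      (I.i3 u hu v hv w hw (clique u hu v hv h1 h2 h3) h4.symm h5.symm)

end Aux2

/-! ### Blocks -/

/-- All vertices of `T` are pairwise adjacent. -/
def Clq (G : SimpleGraph V) (T : Set V) : Prop := ∀ u ∈ T, ∀ v ∈ T, u ≠ v → G.Adj u v

/-- All blocks of `S` are odd complete, in terms of cliques. -/
structure QOdd (G : SimpleGraph V) (S : Set V) : Prop where
  q1 : ∀ T ⊆ S, NoCutVertexSet G T → Clq G T
  q2 : ∀ K ⊆ S, Clq G K → K.Nonempty → (∀ z ∈ S, (∀ k ∈ K, z ≠ k → G.Adj z k) → z ∈ K) →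
    Odd K.ncard

section Aux3

variable {G : SimpleGraph V}

theorem Clq.ncv {T : Set V} (h : Clq G T) (hne : T.Nonempty) : NoCutVertexSet G T := by
  have key : ∀ W ⊆ T, ∀ u ∈ W, ∀ v ∈ W, RS G W u v := by
    intro W hW u hu v hv
    by_cases huv : u = v
    · subst huv; exact RS.refl hu
    · exact RS.edge hu hv (h u (hW hu) v (hW hv) huv)
  rw [ncv_iff]
  exact ⟨hne, key T subset_rfl, fun x _ => key _ Set.sdiff_subset⟩

theorem exists_block {T : Set V} (h : NoCutVertexSet G T) : ∃ B, T ⊆ B ∧ IsBlock G B := by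
  obtain ⟨B, hTB, hB⟩ := Finite.exists_le_maximal (p := fun B : Set V => NoCutVertexSet G B) h
  exact ⟨B, hTB, Set.subset_univ _, hB.prop, fun B' h1 _ h2 => (hB.eq_of_le h2 h1).symm⟩

theorem blocks_iff : (∀ B, IsBlock G B → IsOddComplete G B) ↔ QOdd G Set.univ := by
  constructor
  · intro h
    constructor
    · intro T _ hT u hu v hv
      obtain ⟨B, hTB, hB⟩ := exists_block hT
      exact (h B hB).2 u (hTB hu) v (hTB hv)
    · intro K _ hK hne hmax
      obtain ⟨B, hKB, hB⟩ := exists_block (hK.ncv hne)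
      have : K = B := Set.Subset.antisymm hKB fun z hz =>
        hmax z trivial fun k hk hzk => (h B hB).2 z hz k (hKB hk) hzk
      rw [this]
      exact (h B hB).1
  · intro Q B hB
    have hc : Clq G B := Q.q1 B (Set.subset_univ _) hB.2.1
    have hne : B.Nonempty := (ncv_iff.1 hB.2.1).1
    refine ⟨Q.q2 B (Set.subset_univ _) hc hne ?_, hc⟩
    intro z _ hz
    have hins : Clq G (insert z B) := by
      rintro u (rfl | hu) v (rfl | hv) huv
      · exact absurd rfl huv
      · exact hz v hv huv
      · exact (hz u hu huv.symm).symm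
      · exact hc u hu v hv huv
    have := hB.2.2 (insert z B) (Set.subset_insert _ _) (Set.subset_univ _)
      (hins.ncv ⟨z, by simp⟩)
    rw [← this]; simp

theorem TwinExt.q1_aux {S : Set V} {x y : V} (e : TwinExt G S x y) (Q : QOdd G (S \ {x, y}))
    {T : Set V} (hT : T ⊆ S) (hy : y ∉ T) (hn : NoCutVertexSet G T) : Clq G T := by
  by_cases hx : x ∈ T
  swap
  · refine Q.q1 T (fun z hz => ⟨hT hz, ?_⟩) hn
    rintro (rfl | rfl)
    · exact hx hz
    · exact hy hz
  have hsub : ∀ z ∈ T, z ≠ x → z ∈ S \ {x, y} := by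
    intro z hz hzx
    refine ⟨hT hz, ?_⟩
    rintro (rfl | rfl)
    · exact hzx rfl
    · exact hy hz
  by_cases hne : (T \ {x}).Nonempty
  swap
  · intro u hu v hv huv
    have h1 : ∀ z ∈ T, z = x := fun z hz => by
      by_contra h
      exact hne ⟨z, hz, h⟩
    exact absurd ((h1 u hu).trans (h1 v hv).symm) huv
  have hn' : NoCutVertexSet G (T \ {x}) := NCV.remove hn hne
    (fun a ha b hb h1 h2 h3 => e.clique a (hsub a ha h1.ne') b (hsub b hb h2.ne') h1 h2 h3)
  have hc : Clq G (T \ {x}) := Q.q1 _ (fun z hz => hsub z hz.1 hz.2) hn'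
  rw [ncv_iff] at hn
  -- every vertex of `T` other than `x` is adjacent to `x`
  have key : ∀ z ∈ T, z ≠ x → G.Adj x z := by
    intro z hz hzx
    by_contra hcon
    obtain ⟨n, hnT, hxn⟩ := (hn.2.1 x hx z hz).step hzx.symm
    have hzn : z ≠ n := by rintro rfl; exact hcon hxn
    obtain ⟨m, hmT, hxm⟩ := (hn.2.2 n hnT x ⟨hx, hxn.ne⟩ z ⟨hz, hzn⟩).step hzx.symm
    have hzm : z ≠ m := by rintro rfl; exact hcon hxm
    exact hcon (e.closed n (hsub n hnT hxn.ne') m (hsub m hmT.1 hxm.ne') hxn hxm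
      (fun h => hmT.2 h.symm) z (hsub z hz hzx) (hc z ⟨hz, hzx⟩ n ⟨hnT, hxn.ne'⟩ hzn)
      (hc z ⟨hz, hzx⟩ m ⟨hmT.1, hxm.ne'⟩ hzm))
  intro u hu v hv huv
  by_cases hux : u = x
  · subst hux; exact key v hv huv.symm
  by_cases hvx : v = x
  · subst hvx; exact (key u hu huv).symm
  exact hc u ⟨hu, hux⟩ v ⟨hv, hvx⟩ huv

theorem TwinExt.qodd {S : Set V} {x y : V} (e : TwinExt G S x y) (Q : QOdd G (S \ {x, y})) :
    QOdd G S := by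
  have ec : S \ {y, x} = S \ {x, y} := by rw [Set.pair_comm]
  have Q' : QOdd G (S \ {y, x}) := ec ▸ Q
  have hxy := e.adj.ne
  constructor
  · intro T hT hn
    by_cases hyT : y ∈ T
    swap
    · exact e.q1_aux Q hT hyT hn
    by_cases hxT : x ∈ T
    swap
    · exact e.symm.q1_aux Q' hT hxT hn
    have nbx : ∀ {x y : V}, TwinExt G S x y → x ∈ T → y ∈ T → NoCutVertexSet G (T \ {x}) := by
      intro x y e hx hy
      refine NCV.remove hn ⟨y, hy, e.adj.ne'⟩ ?_
      intro a ha b hb h1 h2 h3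
      by_cases hay : a = y
      · subst hay
        exact (e.nb b ⟨hT hb, by have := h2.ne; grind⟩).1 h2
      by_cases hby : b = y
      · subst hby
        exact ((e.nb a ⟨hT ha, by have := h1.ne; grind⟩).1 h1).symm
      exact e.clique a ⟨hT ha, by have := h1.ne; grind⟩ b ⟨hT hb, by have := h2.ne; grind⟩ h1 h2 h3
    have c1 : Clq G (T \ {x}) :=
      e.symm.q1_aux Q' (Set.sdiff_subset.trans hT) (by simp) (nbx e hxT hyT)
    have c2 : Clq G (T \ {y}) :=
      e.q1_aux Q (Set.sdiff_subset.trans hT) (by simp) (nbx e.symm hyT hxT)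
    intro u hu v hv huv
    by_cases h1 : u ≠ x ∧ v ≠ x
    · exact c1 u ⟨hu, h1.1⟩ v ⟨hv, h1.2⟩ huv
    by_cases h2 : u ≠ y ∧ v ≠ y
    · exact c2 u ⟨hu, h2.1⟩ v ⟨hv, h2.2⟩ huv
    have := e.adj
    have := e.adj.symm
    grind
  · intro K hK hc hne hmax
    by_cases hKxy : x ∈ K ∨ y ∈ K
    · -- `K` is `N ∪ {x, y}`
      have hxk : ∀ k ∈ K, k ≠ x → G.Adj x k := by
        intro k hk hkx
        rcases hKxy with h | h
        · exact hc x h k hk hkx.symm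
        · by_cases hky : k = y
          · subst hky; exact e.adj
          · exact (e.nb k ⟨hK hk, by grind⟩).2 (hc y h k hk (fun h => hky h.symm))
      have hyk : ∀ k ∈ K, k ≠ y → G.Adj y k := by
        intro k hk hky
        by_cases hkx : k = x
        · subst hkx; exact e.adj.symm
        · exact (e.nb k ⟨hK hk, by grind⟩).1 (hxk k hk hkx)
      have hxK : x ∈ K := hmax x e.hx fun k hk h => hxk k hk h.symm
      have hyK : y ∈ K := hmax y e.hy fun k hk h => hyk k hk h.symm
      have hNK : ∀ n ∈ S \ {x, y}, G.Adj x n → n ∈ K := by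
        intro n hn hxn
        refine hmax n hn.1 fun k hk hnk => ?_
        by_cases hkx : k = x
        · subst hkx; exact hxn.symm
        by_cases hky : k = y
        · subst hky; exact ((e.nb n hn).1 hxn).symm
        exact e.clique n hn k ⟨hK hk, by grind⟩ hxn (hxk k hk hkx) hnk
      have hodd : Odd (K \ {x, y}).ncard := by
        obtain ⟨n, hn, hxn⟩ := e.ne
        have hnK := hNK n hn hxn
        by_cases h1 : ∀ m ∈ K \ {x, y}, m = n
        · have : K \ {x, y} = {n} := by
            ext t
            constructor
            · exact fun ht => h1 t ht
            · rintro rfl; exact ⟨hnK, hn.2⟩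
          rw [this]; simp
        · push Not at h1
          obtain ⟨m, hm, hmn⟩ := h1
          refine Q.q2 _ (fun z hz => ⟨hK hz.1, hz.2⟩) (fun u hu v hv => hc u hu.1 v hv.1)
            ⟨n, hnK, hn.2⟩ ?_
          intro z hz hzk
          by_cases hzn : z = n
          · subst hzn; exact ⟨hnK, hn.2⟩
          by_cases hzm : z = m
          · subst hzm; exact hm
          have hxm : G.Adj x m := hxk m hm.1 (by have := hm.2; grind)
          exact ⟨hNK z hz (e.closed n hn m ⟨hK hm.1, hm.2⟩ hxn hxm hmn.symm z hz
            (hzk n ⟨hnK, hn.2⟩ hzn) (hzk m hm hzm)), hz.2⟩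
      have hcard := Set.ncard_sdiff_add_ncard_of_subset (s := {x, y}) (t := K)
        (by rintro z (rfl | rfl) <;> assumption)
      rw [Set.ncard_pair hxy] at hcard
      rw [← hcard]
      exact hodd.add_even (by decide)
    · push Not at hKxy
      have hsub : K ⊆ S \ {x, y} := by
        intro k hk
        refine ⟨hK hk, ?_⟩
        rintro (rfl | rfl)
        · exact hKxy.1 hk
        · exact hKxy.2 hk
      exact Q.q2 K hsub hc hne fun z hz h => hmax z hz.1 h

theorem OddBuilt.qodd {S : Set V} (h : OddBuilt G S) : QOdd G S := by
  induction h with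
  | single v =>
    constructor
    · intro T hT _ u hu w hw huw
      exact absurd ((hT hu : u = v).trans (hT hw : w = v).symm) huw
    · intro K hK _ hne _
      rw [hne.subset_singleton_iff.1 hK]
      simp
  | step S x y e _ ih => exact e.qodd ih

theorem QOdd.sep {S : Set V} (Q : QOdd G S) {U : Set V} {a c x : V} (hx : x ∈ S) (hU : U ⊆ S)
    (hxU : x ∉ U) (h : RS G U a c) (hxa : G.Adj x a) (hxc : G.Adj x c) (hac : a ≠ c) :
    G.Adj a c := by
  obtain ⟨T, hT, -, ha, hc, hn⟩ := cycle_ncv h hxU hxa hxc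
  exact Q.q1 T (hT.trans (Set.insert_subset hx hU)) hn a ha c hc hac

theorem RS.exit {S A : Set V} {u v : V} (h : RS G S u v) (hu : u ∈ A) (hv : v ∉ A) :
    ∃ a ∈ S, ∃ b ∈ S, a ∈ A ∧ b ∉ A ∧ G.Adj a b := by
  obtain ⟨p, hp⟩ := h
  induction p with
  | nil => exact absurd hu hv
  | @cons u b c hadj q ih =>
    by_cases hb : b ∈ A
    · exact ih hb hv (fun z hz => hp z (by simp [hz]))
    · exact ⟨u, hp _ (by simp), b, hp _ (by simp), hu, hb, hadj⟩

theorem exists_nbr {S : Set V} {x y : V} (hS : ∀ u ∈ S, ∀ v ∈ S, RS G S u v) (hx : x ∈ S)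
    (hne : (S \ {x, y}).Nonempty) : ∃ n ∈ S \ {x, y}, G.Adj x n ∨ G.Adj y n := by
  obtain ⟨n0, hn0⟩ := hne
  obtain ⟨a, -, b, hb, haA, hbA, hab⟩ := (hS x hx n0 hn0.1).exit (A := {x, y}) (by simp) hn0.2
  refine ⟨b, ⟨hb, hbA⟩, ?_⟩
  rcases haA with rfl | rfl
  · exact Or.inl hab
  · exact Or.inr hab

theorem QOdd.ext {S : Set V} (Q : QOdd G S) {x y : V} (hx : x ∈ S) (hy : y ∈ S)
    (hxy : G.Adj x y) (hS : ∀ u ∈ S, ∀ v ∈ S, RS G S u v)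
    (hS' : ∀ u ∈ S \ {x, y}, ∀ v ∈ S \ {x, y}, RS G (S \ {x, y}) u v) :
    (S \ {x, y}).Nonempty ∧ TwinExt G S x y ∧ QOdd G (S \ {x, y}) := by
  have hne' := hxy.ne
  -- the edge `xy` is not a maximal clique
  have hmax : ∃ z ∈ S \ {x, y}, G.Adj z x ∧ G.Adj z y := by
    by_contra hcon
    push Not at hcon
    have := Q.q2 {x, y} (by rintro z (rfl | rfl) <;> assumption) (by
      rintro u (rfl | rfl) v (rfl | rfl) h
      · exact absurd rfl h
      · exact hxy
      · exact hxy.symm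
      · exact absurd rfl h) ⟨x, by simp⟩ (by
      intro z hz h
      by_contra hz'
      have h1 : z ≠ x := fun h => hz' (by simp [h])
      have h2 : z ≠ y := fun h => hz' (by simp [h])
      exact hcon z ⟨hz, hz'⟩ (h x (by simp) h1) (h y (by simp) h2))
    rw [Set.ncard_pair hne'] at this
    exact absurd this (by decide)
  obtain ⟨m, hm, hmx, hmy⟩ := hmax
  have nb : ∀ n ∈ S \ {x, y}, (G.Adj x n ↔ G.Adj y n) := by
    intro n hn
    constructor
    · intro hxn
      refine Q.sep (U := S \ {x}) hx Set.sdiff_subset (by simp) ?_ hxy hxn (by grind)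
      have h1 := (hS' m hm n hn).mono (T' := S \ {x}) (by grind)
      exact RS.trans (RS.edge (T := S \ {x}) ⟨hy, hne'.symm⟩ h1.left hmy.symm) h1
    · intro hyn
      refine Q.sep (U := S \ {y}) hy Set.sdiff_subset (by simp) ?_ hxy.symm hyn (by grind)
      have h1 := (hS' m hm n hn).mono (T' := S \ {y}) (by grind)
      exact RS.trans (RS.edge (T := S \ {y}) ⟨hx, hne'⟩ h1.left hmx.symm) h1
  refine ⟨⟨m, hm⟩, ⟨hx, hy, hxy, nb, ⟨m, hm, hmx.symm⟩, ?_, ?_⟩, ?_, ?_⟩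
  · intro a ha b hb h1 h2 h3
    exact Q.sep hx Set.sdiff_subset (by simp) (hS' a ha b hb) h1 h2 h3
  · intro a ha b hb h1 h2 h3 w hw h4 h5
    by_contra hcon
    have hxw : x ≠ w := by grind
    have hbm : b ∈ S \ {a} := ⟨hb.1, h3.symm⟩
    exact hcon (Q.sep (U := S \ {a}) ha.1 Set.sdiff_subset (by simp)
      (RS.trans (RS.edge (T := S \ {a}) ⟨hx, h1.ne⟩ hbm h2)
        (RS.edge (T := S \ {a}) hbm ⟨hw.1, h4.ne⟩ h5.symm)) h1.symm
      h4.symm hxw)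
  · exact fun T hT hn => Q.q1 T (hT.trans Set.sdiff_subset) hn
  · intro K hK hc hne hmaxK
    have hxK : x ∉ K := fun h => (hK h).2 (by simp)
    have hyK : y ∉ K := fun h => (hK h).2 (by simp)
    by_cases hall : ∀ k ∈ K, G.Adj x k
    · have hall' : ∀ k ∈ K, G.Adj y k := fun k hk => (nb k (hK hk)).1 (hall k hk)
      have hodd : Odd (insert x (insert y K)).ncard := by
        refine Q.q2 _ ?_ ?_ ⟨x, by simp⟩ ?_
        · rintro z (rfl | rfl | hz)
          · exact hx
          · exact hy
          · exact (hK hz).1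
        · rintro u (rfl | rfl | hu) v (rfl | rfl | hv) huv
          · exact absurd rfl huv
          · exact hxy
          · exact hall v hv
          · exact hxy.symm
          · exact absurd rfl huv
          · exact hall' v hv
          · exact (hall u hu).symm
          · exact (hall' u hu).symm
          · exact hc u hu v hv huv
        · intro z hz h
          by_contra hz'
          have h1 : z ≠ x := fun h => hz' (by simp [h])
          have h2 : z ≠ y := fun h => hz' (by simp [h])
          exact hz' (Or.inr (Or.inr (hmaxK z ⟨hz, by grind⟩
            fun k hk hzk => h k (Or.inr (Or.inr hk)) hzk)))
      rw [Set.ncard_insert_of_notMem (by simp [hne', hxK]), Set.ncard_insert_of_notMem hyK] at hodd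
      rw [Nat.odd_iff] at hodd ⊢
      omega
    · refine Q.q2 K (hK.trans Set.sdiff_subset) hc hne ?_
      intro z hz h
      by_cases hzx : z = x
      · subst hzx
        exact absurd (fun k hk => h k hk (by rintro rfl; exact hxK hk)) hall
      by_cases hzy : z = y
      · subst hzy
        exact absurd (fun k hk => (nb k (hK hk)).2 (h k hk (by rintro rfl; exact hyK hk))) hall
      exact hmaxK z ⟨hz, by grind⟩ h

end Aux3

/-! ### Removing an edge from a connected claw-free graph -/

section Aux4

variable {G : SimpleGraph V}

theorem claw_adj (h : ClawFree G) {c a b d : V} (ha : G.Adj c a) (hb : G.Adj c b) (hd : G.Adj c d)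
    (hab : a ≠ b) (had : a ≠ d) (hbd : b ≠ d) : G.Adj a b ∨ G.Adj a d ∨ G.Adj b d := by
  by_contra hcon
  push Not at hcon
  obtain ⟨h1, h2, h3⟩ := hcon
  have h1' : ¬ G.Adj b a := fun h => h1 h.symm
  have h2' : ¬ G.Adj d a := fun h => h2 h.symm
  have h3' : ¬ G.Adj d b := fun h => h3 h.symm
  have na := ha.ne
  have nb := hb.ne
  have nd := hd.ne
  refine h.elim ⟨⟨Sum.elim (fun _ => c) ![a, b, d], ?_⟩, ?_⟩
  · rintro (i | i) (j | j) hij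
    · exact congrArg _ (Subsingleton.elim _ _)
    · fin_cases j <;> simp_all
    · fin_cases i <;> simp_all
    · fin_cases i <;> fin_cases j <;> simp_all
  · have ha' := ha.symm
    have hb' := hb.symm
    have hd' := hd.symm
    intro p q
    change G.Adj (Sum.elim (fun _ => c) ![a, b, d] p) (Sum.elim (fun _ => c) ![a, b, d] q) ↔ _
    rcases p with i | i <;> rcases q with j | j
    · simp
    · fin_cases j <;> simp_all
    · fin_cases i <;> simp_all
    · fin_cases i <;> fin_cases j <;> simp_all

theorem exists_level {S : Set V} (hS : ∀ u ∈ S, ∀ v ∈ S, RS G S u v) {r : V} (hr : r ∈ S) :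
    ∃ f : V → ℕ, f r = 0 ∧ (∀ z ∈ S, z ≠ r → ∃ p ∈ S, G.Adj p z ∧ f p + 1 = f z) ∧
      ∀ a ∈ S, ∀ b ∈ S, G.Adj a b → f a ≤ f b + 1 := by
  classical
  set H := G.induce S with hH
  have hpre : H.Preconnected := preconnected_iff_RS.2 hS
  have hlip : ∀ a b : S, H.Adj a b → H.dist a ⟨r, hr⟩ ≤ H.dist b ⟨r, hr⟩ + 1 := by
    intro a b hab
    obtain ⟨p, hp⟩ := (hpre b ⟨r, hr⟩).exists_walk_length_eq_dist
    have := SimpleGraph.dist_le (Walk.cons hab p)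
    rw [Walk.length_cons, hp] at this
    exact this
  refine ⟨fun z => if h : z ∈ S then H.dist ⟨z, h⟩ ⟨r, hr⟩ else 0, by simp [hr], ?_, ?_⟩
  · intro z hz hzr
    obtain ⟨p, hp⟩ := (hpre ⟨z, hz⟩ ⟨r, hr⟩).exists_walk_length_eq_dist
    generalize hz0 : (⟨z, hz⟩ : S) = z0 at p hp
    generalize hr0 : (⟨r, hr⟩ : S) = r0 at p hp
    cases p with
    | nil => exact absurd (congrArg Subtype.val (hz0.trans hr0.symm)) hzr
    | @cons _ w _ hadj q =>
      subst hz0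
      subst hr0
      refine ⟨w.1, w.2, hadj.symm, ?_⟩
      have h1 : H.dist ⟨z, hz⟩ ⟨r, hr⟩ ≤ H.dist ⟨w.1, w.2⟩ ⟨r, hr⟩ + 1 := hlip _ _ hadj
      have h2 : H.dist ⟨w.1, w.2⟩ ⟨r, hr⟩ ≤ q.length := SimpleGraph.dist_le q
      rw [Walk.length_cons] at hp
      simp only [hz, w.2, dif_pos]
      omega
  · intro a ha b hb hab
    simp only [ha, hb, dif_pos]
    exact hlip ⟨a, ha⟩ ⟨b, hb⟩ hab

theorem descend {T : Set V} {r : V} (hr : r ∈ T) (f : V → ℕ)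
    (h : ∀ z ∈ T, z ≠ r → ∃ p ∈ T, G.Adj p z ∧ f p + 1 = f z) :
    ∀ u ∈ T, ∀ v ∈ T, RS G T u v := by
  have key : ∀ n, ∀ z ∈ T, f z = n → RS G T z r := by
    intro n
    induction n with
    | zero =>
      intro z hz hf
      by_cases hzr : z = r
      · subst hzr; exact RS.refl hz
      · obtain ⟨p, _, _, h2⟩ := h z hz hzr
        omega
    | succ n ih =>
      intro z hz hf
      by_cases hzr : z = r
      · subst hzr; exact RS.refl hz
      · obtain ⟨p, hp, h1, h2⟩ := h z hz hzr
        exact (RS.edge hz hp h1.symm).trans (ih p hp (by omega))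
  intro u hu v hv
  exact (key _ u hu rfl).trans (key _ v hv rfl).symm

/-- Sumner's lemma. -/
theorem sumner (hcf : ClawFree G) {S : Set V} (hS : ∀ u ∈ S, ∀ v ∈ S, RS G S u v) {r s : V}
    (hr : r ∈ S) (hs : s ∈ S) (hrs : s ≠ r) :
    ∃ x ∈ S, ∃ y ∈ S, G.Adj x y ∧
      ∀ u ∈ S \ {x, y}, ∀ v ∈ S \ {x, y}, RS G (S \ {x, y}) u v := by
  obtain ⟨f, hf0, hpar, hlip⟩ := exists_level hS hr
  obtain ⟨v, hv, hmax⟩ := Set.exists_max_image S f (Set.toFinite S) ⟨r, hr⟩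
  have hv1 : 1 ≤ f v := by
    obtain ⟨p, _, _, h⟩ := hpar s hs hrs
    have := hmax s hs
    omega
  have hvr : v ≠ r := by rintro rfl; omega
  by_cases hA : ∃ a ∈ S, ∃ b ∈ S, G.Adj a b ∧ f a = f v ∧ f b = f v
  · obtain ⟨a, ha, b, hb, hab, hfa, hfb⟩ := hA
    refine ⟨a, ha, b, hb, hab, descend (r := r) ⟨hr, ?_⟩ f ?_⟩
    · rintro (rfl | rfl) <;> omega
    · intro z hz hzr
      obtain ⟨p, hp, h1, h2⟩ := hpar z hz.1 hzr
      have := hmax z hz.1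
      refine ⟨p, ⟨hp, ?_⟩, h1, h2⟩
      rintro (rfl | rfl) <;> omega
  push Not at hA
  obtain ⟨w, hw, hwv, hfw⟩ := hpar v hv hvr
  by_cases hwr : w = r
  · subst hwr
    refine ⟨w, hw, v, hv, hwv, ?_⟩
    have hlev : ∀ z ∈ S \ {w, v}, G.Adj w z ∧ f z = f v := by
      intro z hz
      have hzw : z ≠ w := fun h => hz.2 (by simp [h])
      obtain ⟨p, hp, h1, h2⟩ := hpar z hz.1 hzw
      have := hmax z hz.1
      have hpw : p = w := by
        by_contra hpw
        obtain ⟨q, _, _, h3⟩ := hpar p hp hpw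
        omega
      subst hpw
      exact ⟨h1, by omega⟩
    intro a ha b hb
    by_cases hab : a = b
    · subst hab; exact RS.refl ha
    exfalso
    have hav : a ≠ v := fun h => ha.2 (by simp [h])
    have hbv : b ≠ v := fun h => hb.2 (by simp [h])
    obtain ⟨a1, a2⟩ := hlev a ha
    obtain ⟨b1, b2⟩ := hlev b hb
    rcases claw_adj hcf hwv a1 b1 hav.symm hbv.symm hab with h | h | h
    · exact hA v hv a ha.1 h rfl a2
    · exact hA v hv b hb.1 h rfl b2
    · exact hA a ha.1 b hb.1 h a2 b2
  · obtain ⟨q, hq, hqw, hfq⟩ := hpar w hw hwr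
    refine ⟨w, hw, v, hv, hwv, descend (r := r) ⟨hr, ?_⟩ f ?_⟩
    · rintro (rfl | rfl)
      · exact hwr rfl
      · exact hvr rfl
    · intro z hz hzr
      obtain ⟨p, hp, h1, h2⟩ := hpar z hz.1 hzr
      have hzm := hmax z hz.1
      refine ⟨p, ⟨hp, ?_⟩, h1, h2⟩
      rintro (rfl | rfl)
      · have hzv : z ≠ v := fun h => hz.2 (by simp [h])
        have hfz : f z = f v := by omega
        rcases claw_adj hcf hwv h1 hqw.symm hzv.symm (by rintro rfl; omega)
          (by rintro rfl; omega) with h | h | h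
        · exact hA v hv z hz.1 h rfl hfz
        · have := hlip v hv q hq h; omega
        · have := hlip z hz.1 q hq h; omega
      · omega

theorem set_cases {S : Set V} (hne : S.Nonempty) :
    (∃ v, S = {v}) ∨ ∃ r ∈ S, ∃ s ∈ S, s ≠ r := by
  obtain ⟨r, hr⟩ := hne
  by_cases h : ∃ s ∈ S, s ≠ r
  · obtain ⟨s, hs, h⟩ := h
    exact Or.inr ⟨r, hr, s, hs, h⟩
  · push Not at h
    left
    refine ⟨r, ?_⟩
    ext t
    exact ⟨fun ht => h t ht, by rintro rfl; exact hr⟩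

theorem ncard_lt {S : Set V} {x y : V} (hx : x ∈ S) : (S \ {x, y}).ncard < S.ncard := by
  refine Set.ncard_lt_ncard ⟨Set.sdiff_subset, fun h => ?_⟩ (Set.toFinite S)
  exact (h hx).2 (by simp)

theorem dichotomy (hcf : ClawFree G) : ∀ n, ∀ S : Set V, S.ncard = n → S.Nonempty →
    (∀ u ∈ S, ∀ v ∈ S, RS G S u v) → PDec G S ∨ OddBuilt G S := by
  intro n
  induction n using Nat.strong_induction_on with
  | _ n ih =>
    intro S hn hne hS
    rcases set_cases hne with ⟨v, rfl⟩ | ⟨r, hr, s, hs, hrs⟩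
    · exact Or.inr (OddBuilt.single v)
    obtain ⟨x, hx, y, hy, hxy, hS'⟩ := sumner hcf hS hr hs hrs
    rcases Set.eq_empty_or_nonempty (S \ {x, y}) with h0 | hne'
    · exact Or.inl (PDec.pair S x y hx hy hxy (PDec.nil.cast h0.symm))
    rcases ih _ (hn ▸ ncard_lt hx) (S \ {x, y}) rfl hne' hS' with h | h
    · exact Or.inl (PDec.pair S x y hx hy hxy h)
    · by_cases hD : PDec G S
      · exact Or.inl hD
      · exact Or.inr (OddBuilt.step S x y
          (ext_or_dec hx hy hxy (exists_nbr hS hx hne') h.inv hD) h)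

theorem qodd_built (hcf : ClawFree G) : ∀ n, ∀ S : Set V, S.ncard = n → S.Nonempty →
    (∀ u ∈ S, ∀ v ∈ S, RS G S u v) → QOdd G S → OddBuilt G S := by
  intro n
  induction n using Nat.strong_induction_on with
  | _ n ih =>
    intro S hn hne hS Q
    rcases set_cases hne with ⟨v, rfl⟩ | ⟨r, hr, s, hs, hrs⟩
    · exact OddBuilt.single v
    obtain ⟨x, hx, y, hy, hxy, hS'⟩ := sumner hcf hS hr hs hrs
    obtain ⟨hne', e, Q'⟩ := Q.ext hx hy hxy hS hS'
    exact OddBuilt.step S x y e (ih _ (hn ▸ ncard_lt hx) _ rfl hne' hS' Q')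

/-! ### Induced path decompositions -/

theorem inducedPath_range {n : ℕ} (f : Fin n → V) (hf : Function.Injective f)
    (h : ∀ i j, G.Adj (f i) (f j) ↔ (pathGraph n).Adj i j) :
    IsInducedPathOn G (Set.range f) n := by
  refine ⟨Iso.symm ⟨Equiv.ofInjective f hf, ?_⟩⟩
  intro i j
  exact h i j

theorem inducedPath_two {a b : V} (h : G.Adj a b) : IsInducedPathOn G {a, b} 2 := by
  have := h.ne
  have h' := h.symm
  have e : Set.range ![a, b] = {a, b} := by simp [Set.pair_comm]
  rw [← e]
  apply inducedPath_range
  · intro i j hij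
    fin_cases i <;> fin_cases j <;> simp_all
  · intro i j
    rw [pathGraph_adj]
    fin_cases i <;> fin_cases j <;> simp_all

theorem inducedPath_three {a b c : V} (h1 : G.Adj a b) (h2 : G.Adj b c) (h3 : a ≠ c)
    (h4 : ¬ G.Adj a c) : IsInducedPathOn G {a, b, c} 3 := by
  have := h1.ne
  have := h2.ne
  have h1' := h1.symm
  have h2' := h2.symm
  have h4' : ¬ G.Adj c a := fun h => h4 h.symm
  have e : Set.range ![a, b, c] = {a, b, c} := by
    ext t; simp [Fin.exists_fin_succ, eq_comm]; tauto
  rw [← e]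
  apply inducedPath_range
  · intro i j hij
    fin_cases i <;> fin_cases j <;> simp_all
  · intro i j
    rw [pathGraph_adj]
    fin_cases i <;> fin_cases j <;> simp_all

theorem add_part {S P : Set V} (hP : P ⊆ S) (hpath : ∃ n, 2 ≤ n ∧ IsInducedPathOn G P n)
    {D : Set (Set V)} (hD1 : ∀ Q ∈ D, Q ⊆ S \ P ∧ ∃ n, 2 ≤ n ∧ IsInducedPathOn G Q n)
    (hD2 : ∀ a ∈ S \ P, ∃! Q, Q ∈ D ∧ a ∈ Q) :
    ∃ D : Set (Set V), (∀ Q ∈ D, Q ⊆ S ∧ ∃ n, 2 ≤ n ∧ IsInducedPathOn G Q n) ∧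
      ∀ a ∈ S, ∃! Q, Q ∈ D ∧ a ∈ Q := by
  refine ⟨insert P D, ?_, ?_⟩
  · rintro Q (rfl | hQ)
    · exact ⟨hP, hpath⟩
    · exact ⟨(hD1 Q hQ).1.trans Set.sdiff_subset, (hD1 Q hQ).2⟩
  · intro a ha
    by_cases haP : a ∈ P
    · refine ⟨P, ⟨by simp, haP⟩, ?_⟩
      rintro Q ⟨rfl | hQ, haQ⟩
      · rfl
      · exact absurd haP ((hD1 Q hQ).1 haQ).2
    · obtain ⟨Q, ⟨hQ, haQ⟩, hu⟩ := hD2 a ⟨ha, haP⟩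
      refine ⟨Q, ⟨Or.inr hQ, haQ⟩, ?_⟩
      rintro R ⟨rfl | hR, haR⟩
      · exact absurd haR haP
      · exact hu R ⟨hR, haR⟩

theorem PDec.parts {S : Set V} (h : PDec G S) :
    ∃ D : Set (Set V), (∀ P ∈ D, P ⊆ S ∧ ∃ n, 2 ≤ n ∧ IsInducedPathOn G P n) ∧
      ∀ a ∈ S, ∃! P, P ∈ D ∧ a ∈ P := by
  induction h with
  | nil => exact ⟨∅, by simp, by simp⟩
  | pair S a b ha hb hab _ ih =>
    obtain ⟨D, h1, h2⟩ := ih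
    exact add_part (by rintro z (rfl | rfl) <;> assumption) ⟨2, le_rfl, inducedPath_two hab⟩ h1 h2
  | tri S a b c ha hb hc hab hbc hne hac _ ih =>
    obtain ⟨D, h1, h2⟩ := ih
    exact add_part (by rintro z (rfl | rfl | rfl) <;> assumption)
      ⟨3, by norm_num, inducedPath_three hab hbc hne hac⟩ h1 h2

theorem PDec.hasIPD (h : PDec G Set.univ) : HasIPD G := by
  obtain ⟨D, h1, h2⟩ := h.parts
  refine ⟨D, ⟨?_, fun a => h2 a trivial⟩, fun P hP => (h1 P hP).2⟩
  intro he
  obtain ⟨n, hn, ⟨φ⟩⟩ := (h1 ∅ he).2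
  exact (φ.symm ⟨0, by omega⟩).2

theorem PDec.union {S T : Set V} (hS : PDec G S) (hT : PDec G T) (hd : Disjoint S T) :
    PDec G (S ∪ T) := by
  rw [Set.disjoint_left] at hd
  induction hS with
  | nil => exact hT.cast (by simp)
  | pair S a b ha hb hab _ ih =>
    have := hd ha
    have := hd hb
    refine PDec.pair _ a b (Or.inl ha) (Or.inl hb) hab ((ih fun z hz => hd hz.1).cast ?_)
    clear ih
    grind
  | tri S a b c ha hb hc hab hbc hne hac _ ih =>
    have := hd ha
    have := hd hb
    have := hd hc
    refine PDec.tri _ a b c (Or.inl ha) (Or.inl hb) (Or.inl hc) hab hbc hne hac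
      ((ih fun z hz => hd hz.1).cast ?_)
    clear ih
    grind

theorem path_dec : ∀ n, 2 ≤ n → ∀ f : ℕ → V, (∀ i < n, ∀ j < n, f i = f j → i = j) →
    (∀ i < n, ∀ j < n, (G.Adj (f i) (f j) ↔ i + 1 = j ∨ j + 1 = i)) →
    PDec G (f '' {i | i < n}) := by
  intro n
  induction n using Nat.strong_induction_on with
  | _ n ih =>
    intro hn f hf hadj
    have mem : ∀ i < n, f i ∈ f '' {i | i < n} := fun i hi => ⟨i, hi, rfl⟩
    by_cases h3 : n = 3
    · subst h3
      refine PDec.tri _ (f 0) (f 1) (f 2) (mem _ (by norm_num)) (mem _ (by norm_num))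
        (mem _ (by norm_num)) ((hadj _ (by norm_num) _ (by norm_num)).2 (by norm_num))
        ((hadj _ (by norm_num) _ (by norm_num)).2 (by norm_num))
        (fun h => absurd (hf _ (by norm_num) _ (by norm_num) h) (by norm_num))
        (fun h => absurd ((hadj _ (by norm_num) _ (by norm_num)).1 h) (by norm_num))
        (PDec.nil.cast ?_)
      symm
      rw [Set.sdiff_eq_empty]
      rintro _ ⟨i, hi, rfl⟩
      have hi' : i < 3 := hi
      interval_cases i <;> simp
    · obtain ⟨m, rfl⟩ : ∃ m, n = m + 2 := ⟨n - 2, by omega⟩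
      refine PDec.pair _ (f m) (f (m + 1)) (mem _ (by omega)) (mem _ (by omega))
        ((hadj _ (by omega) _ (by omega)).2 (Or.inl rfl)) ?_
      have e : f '' {i | i < m + 2} \ {f m, f (m + 1)} = f '' {i | i < m} := by
        ext t
        constructor
        · rintro ⟨⟨i, hi, rfl⟩, h2⟩
          have hi' : i < m + 2 := hi
          refine ⟨i, ?_, rfl⟩
          show i < m
          by_contra h
          have : i = m ∨ i = m + 1 := by omega
          rcases this with rfl | rfl <;> simp at h2
        · rintro ⟨i, hi, rfl⟩
          have hi' : i < m := hi
          refine ⟨mem i (by omega), ?_⟩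
          rintro (h | h)
          · have := hf i (by omega) m (by omega) h
            omega
          · have := hf i (by omega) (m + 1) (by omega) h
            omega
      rw [e]
      by_cases hm : m = 0
      · subst hm
        exact PDec.nil.cast (by simp)
      · exact ih m (by omega) (by omega) f (fun i hi j hj => hf i (by omega) j (by omega))
          (fun i hi j hj => hadj i (by omega) j (by omega))

theorem inducedPath_dec {P : Set V} {n : ℕ} (hn : 2 ≤ n) (h : IsInducedPathOn G P n) :
    PDec G P := by
  obtain ⟨φ⟩ := h
  set f : ℕ → V := fun i => if h : i < n then (φ.symm ⟨i, h⟩).1 else (φ.symm ⟨0, by omega⟩).1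
    with hfdef
  have hf : ∀ i, ∀ h : i < n, f i = (φ.symm ⟨i, h⟩).1 := by
    intro i h
    simp [hfdef, h]
  have := path_dec (G := G) n hn f ?_ ?_
  · refine this.cast ?_
    ext t
    constructor
    · rintro ⟨i, hi, rfl⟩
      rw [hf i hi]
      exact (φ.symm ⟨i, hi⟩).2
    · intro ht
      refine ⟨(φ ⟨t, ht⟩).1, (φ ⟨t, ht⟩).2, ?_⟩
      rw [hf _ (φ ⟨t, ht⟩).2]
      simp
  · intro i hi j hj h
    rw [hf i hi, hf j hj] at h
    have := φ.symm.injective (Subtype.ext h)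
    simpa using this
  · intro i hi j hj
    rw [hf i hi, hf j hj]
    have h1 := φ.symm.map_adj_iff (v := ⟨i, hi⟩) (w := ⟨j, hj⟩)
    rw [pathGraph_adj] at h1
    exact h1

theorem HasIPD.dec (h : HasIPD G) : PDec G Set.univ := by
  obtain ⟨D, hD, hP⟩ := h
  have key : ∀ D' : Set (Set V), D'.Finite → D' ⊆ D → PDec G (⋃₀ D') := by
    intro D' hfin
    induction D', hfin using Set.Finite.induction_on with
    | empty => intro _; exact PDec.nil.cast (by simp)
    | @insert P D' hPD' _ ih =>
      intro hsub
      obtain ⟨n, hn, hp⟩ := hP P (hsub (by simp))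
      rw [Set.sUnion_insert]
      refine (inducedPath_dec hn hp).union (ih fun Q hQ => hsub (Or.inr hQ)) ?_
      rw [Set.disjoint_left]
      rintro a haP ⟨Q, hQ, haQ⟩
      have hne : P = Q := (hD.2 a).unique ⟨hsub (by simp), haP⟩ ⟨hsub (Or.inr hQ), haQ⟩
      exact hPD' (hne ▸ hQ)
  refine (key D (Set.toFinite D) subset_rfl).cast ?_
  ext a
  obtain ⟨P, ⟨h1, h2⟩, -⟩ := hD.2 a
  simp only [Set.mem_univ, iff_true]
  exact ⟨P, h1, h2⟩

end Aux4

/-- a connected claw-free graph has an IPD iff it has at least one block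
that is not a complete graph of odd order. -/
theorem clawfree_IPD_iff_block (G : SimpleGraph V)
    (hconn : G.Connected) (hcf : ClawFree G) :
    HasIPD G ↔ ∃ B : Set V, IsBlock G B ∧ ¬ IsOddComplete G B := by
  have hS : ∀ u ∈ (Set.univ : Set V), ∀ v ∈ (Set.univ : Set V), RS G Set.univ u v := by
    intro u _ v _
    obtain ⟨p⟩ := hconn.preconnected u v
    exact ⟨p, fun _ _ => trivial⟩
  have hne : (Set.univ : Set V).Nonempty := by
    obtain ⟨v⟩ := hconn.nonempty
    exact ⟨v, trivial⟩
  constructor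
  · intro h
    by_contra hcon
    push Not at hcon
    exact (qodd_built hcf _ _ rfl hne hS (blocks_iff.1 hcon)).not_dec h.dec
  · rintro ⟨B, hB, hodd⟩
    rcases dichotomy hcf _ _ rfl hne hS with h | h
    · exact h.hasIPD
    · exact absurd (blocks_iff.2 h.qodd B hB) hodd
end
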